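/- Let π be an irreducible pair on a finite alphabet A with N = #A, and let Ē(π) = {ρ₁∘ρ₀⁻¹ : ρ ∈ E(π)} ⊆ Sym({1,…,N}) be the non-labeled extended Rauzy class of π. If Λ(π) is simple, then 2·#E(π) = N!·#Ē(π); if Λ(π) is not simple, then #E(π) = N!·#Ē(π). -/

import Mathlib

open Equiv

/-- A (labeled) pair on alphabet `A`: two bijections from `A` to positions.
Positions are `Fin (Fintype.card A)`, 0-indexed: position `j : Fin N`
corresponds to the position `j+1 ∈ {1,…,N}` of the paper. -/
abbrev RPair (A : Type*) [Fintype A] := Bool → (A ≃ Fin (Fintype.card A))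

variable {A : Type*} [Fintype A]

/-- Irreducibility: `π₁(π₀⁻¹({1,…,k})) = {1,…,k}` only for `k = N`. -/
def PairIrreducible (π : RPair A) : Prop :=
  ∀ k : Fin (Fintype.card A),
    (∀ x : A, π false x ≤ k → π true x ≤ k) → (k : ℕ) + 1 = Fintype.card A

/-- Type-ε right Rauzy induction sends `π` to `π'`.  Here `zc = π_ε⁻¹(N)` and
`zo = π_{1-ε}⁻¹(N)` are characterized as the letters of maximal position. -/
def RightMove (π π' : RPair A) : Prop :=
  ∃ ε : Bool, ∃ zc zo : A,
    (∀ x : A, π ε x ≤ π ε zc) ∧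
    (∀ x : A, π (!ε) x ≤ π (!ε) zo) ∧
    π' ε = π ε ∧
    (∀ b : A, π (!ε) b ≤ π (!ε) zc → π' (!ε) b = π (!ε) b) ∧
    ((π' (!ε) zo : ℕ) = (π (!ε) zc : ℕ) + 1) ∧
    (∀ b : A, ¬ π (!ε) b ≤ π (!ε) zc → b ≠ zo → (π' (!ε) b : ℕ) = (π (!ε) b : ℕ) + 1)

/-- Type-ε left Rauzy induction sends `π` to `π'`.  Here `ac = π_ε⁻¹(1)` and
`ao = π_{1-ε}⁻¹(1)` are characterized as the letters of minimal position. -/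
def LeftMove (π π' : RPair A) : Prop :=
  ∃ ε : Bool, ∃ ac ao : A,
    (∀ x : A, π ε ac ≤ π ε x) ∧
    (∀ x : A, π (!ε) ao ≤ π (!ε) x) ∧
    π' ε = π ε ∧
    (∀ b : A, π (!ε) ac ≤ π (!ε) b → π' (!ε) b = π (!ε) b) ∧
    ((π' (!ε) ao : ℕ) = (π (!ε) ac : ℕ) - 1) ∧
    (∀ b : A, ¬ π (!ε) ac ≤ π (!ε) b → b ≠ ao → (π' (!ε) b : ℕ) = (π (!ε) b : ℕ) - 1)

/-- The Rauzy class `R(π)`: pairs reachable by right Rauzy inductions. -/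
def RClass (π : RPair A) : Set (RPair A) := {ρ | Relation.ReflTransGen RightMove π ρ}

/-- The extended Rauzy class `E(π)`: pairs reachable by left and right Rauzy inductions. -/
def EClass (π : RPair A) : Set (RPair A) :=
  {ρ | Relation.ReflTransGen (fun x y => RightMove x y ∨ LeftMove x y) π ρ}

/-- `π ∘ ν = (π₀ ∘ ν, π₁ ∘ ν)`. -/
def pairRename (π : RPair A) (ν : Equiv.Perm A) : RPair A := fun ε => ν.trans (π ε)

/-- The renaming set `G(π) = {ν : π ∘ ν ∈ E(π)}`. -/
def renamings (π : RPair A) : Set (Equiv.Perm A) := {ν | pairRename π ν ∈ EClass π}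

/-- The non-labeled permutation `π₁ ∘ π₀⁻¹`. -/
def nonlabeled (π : RPair A) : Equiv.Perm (Fin (Fintype.card A)) :=
  (π false).symm.trans (π true)

/-- The position `1` (smallest). -/
def posFirst (A : Type*) [Fintype A] [Nonempty A] : Fin (Fintype.card A) :=
  ⟨0, Fintype.card_pos⟩

/-- The position `N` (largest). -/
def posLast (A : Type*) [Fintype A] [Nonempty A] : Fin (Fintype.card A) :=
  ⟨Fintype.card A - 1, Nat.sub_lt Fintype.card_pos Nat.one_pos⟩

/-- A pair is standard if `π₀(π₁⁻¹(1)) = π₁(π₀⁻¹(1)) = N`. -/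
def PairStandard [Nonempty A] (π : RPair A) : Prop :=
  π false ((π true).symm (posFirst A)) = posLast A ∧
  π true ((π false).symm (posFirst A)) = posLast A

/-- `S` is the permutation `S(π)` of the paper. -/
def IsS [Nonempty A] (π : RPair A) (S : Equiv.Perm A) : Prop :=
  ∀ b : A,
    (π true b = posFirst A → S b = (π false).symm (posFirst A)) ∧
    (π true b ≠ posFirst A →
      (((π true b : ℕ) = (π true ((π false).symm (posLast A)) : ℕ) + 1 →
        (π false (S b) : ℕ) = (π false ((π true).symm (posLast A)) : ℕ) + 1) ∧
      ((π true b : ℕ) ≠ (π true ((π false).symm (posLast A)) : ℕ) + 1 →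
        (π false (S b) : ℕ) =
          (π false ((π true).symm
            ⟨(π true b : ℕ) - 1,
              Nat.lt_of_le_of_lt (Nat.sub_le _ _) (π true b).isLt⟩) : ℕ) + 1)))

/-- The marked letter `X(π) = π₀⁻¹(1)`. -/
def XOf [Nonempty A] (π : RPair A) : A := (π false).symm (posFirst A)

/-- `Q` is the permutation `Q(π)` of the paper (constructed from `S = S(π)`). -/
def IsQ [Nonempty A] (π : RPair A) (S Q : Equiv.Perm A) : Prop :=
  Q (XOf π) = XOf π ∧
  ∀ b : A, b ≠ XOf π →
    (S b = XOf π → Q b = S (S b)) ∧ (S b ≠ XOf π → Q b = S b)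

/-- `Λ`: the multiset of cardinalities of the orbits of `Q` on `A ∖ {X}`
(for `Q` fixing `X`): the nontrivial cycle lengths of `Q` together with one `1`
for each fixed point of `Q` other than `X`. -/
def lamOf [DecidableEq A] (Q : Equiv.Perm A) : Multiset ℕ :=
  Q.cycleType + Multiset.replicate ((Finset.univ.filter fun a => Q a = a).card - 1) 1

/-- The centralizer `Z(π)` of `(X(π), Q(π))`. -/
def ZOf [Nonempty A] (π : RPair A) (Q : Equiv.Perm A) : Set (Equiv.Perm A) :=
  {ν | ν (XOf π) = XOf π ∧ ν⁻¹ * Q * ν = Q}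

/-!
Listing the letters by position turns a labeled pair into a pair of words. The renamings `σ` for
which `σ · p` can be reached from `p` form a group `G`, and each fibre of `nonlabeled` on the
extended class is a free orbit of `G`; so the theorem says that `G` is the alternating group when
the vertex angles are pairwise distinct, and the full symmetric group otherwise.

* `G` contains the alternating group: after reaching a standard pair `(a U, V a)`, one can rotate
  `U` and `V` and exchange `a` with another letter, which produces every `3`-cycle.
* If the angles are distinct, `G` consists of even permutations. A Rauzy move induces a linear map
  of determinant one that carries the alternating intersection form of one pair to that of the next
  and preserves the increments of every function of the vertex angle. Distinct angles make these
  increments span the radical of the form, so a renaming in `G` differs from such a map by an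
  isometry fixing the radical pointwise, which has determinant one.
* If two vertices have the same angle, carrying a letter along the top word from one of them to the
  other exchanges the lengths of two cycles at each step, and yields an odd element of `G`.
-/

namespace Rauzy

/-! ### Isometries of alternating forms -/

section Alternating

open LinearMap Module

variable {K V : Type*} [Field K] [AddCommGroup V] [Module K V] {ω : LinearMap.BilinForm K V}

lemma isOrthogonal_transvection (hω : ω.IsAlt) (u : V) (c : K) :
    ω.IsOrthogonal (transvection (c • ω u) u) := by
  intro x y
  simp only [transvection.apply, map_add, map_smul, LinearMap.add_apply, LinearMap.smul_apply,
    smul_eq_mul, hω.self_eq_zero]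
  rw [← hω.neg_eq u x]
  ring

lemma det_transvection_comp [FiniteDimensional K V] (hω : ω.IsAlt) (u : V) (c : K) (M : End K V) :
    LinearMap.det (transvection (c • ω u) u ∘ₗ M) = LinearMap.det M := by
  rw [LinearMap.det_comp, transvection.det, LinearMap.smul_apply, hω.self_eq_zero, smul_zero,
    add_zero, one_mul]

lemma eqLocus_id_le_transvection_comp {M : End K V} (hM : ω.IsOrthogonal M) (x : V) (c : K) :
    eqLocus M .id ≤ eqLocus (transvection (c • ω (M x - x)) (M x - x) ∘ₗ M) .id := by
  intro a (ha : M a = a)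
  have hxa : ω (M x) a = ω x a := by simpa only [ha] using hM x a
  change transvection _ _ (M a) = a
  rw [ha, transvection.apply, LinearMap.smul_apply, map_sub, LinearMap.sub_apply, hxa, sub_self,
    smul_zero, zero_smul, add_zero]

lemma exists_isOrthogonal_eqLocus_lt_of_apply_ne_zero [FiniteDimensional K V] (hω : ω.IsAlt)
    {M : End K V} (hM : ω.IsOrthogonal M) {x : V} (hx : ω x (M x) ≠ 0) :
    ∃ N : End K V, ω.IsOrthogonal N ∧ LinearMap.det N = LinearMap.det M ∧
      eqLocus M .id < eqLocus N .id := by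
  set u := M x - x with hu
  refine ⟨transvection ((ω x (M x))⁻¹ • ω u) u ∘ₗ M,
    fun a b => (isOrthogonal_transvection hω u _ _ _).trans (hM a b),
    det_transvection_comp hω u _ M,
    SetLike.lt_iff_le_and_exists.2 ⟨eqLocus_id_le_transvection_comp hM x _, x, ?_, ?_⟩⟩
  · have hux : ω u (M x) = -ω x (M x) := by
      rw [hu, map_sub, LinearMap.sub_apply, hω.self_eq_zero, zero_sub]
    change transvection _ _ (M x) = x
    rw [transvection.apply, LinearMap.smul_apply, hux, smul_eq_mul, mul_neg, inv_mul_cancel₀ hx,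
      neg_one_smul, hu]
    abel
  · intro (hfix : M x = x)
    exact hx (by rw [hfix, hω.self_eq_zero])

lemma exists_isOrthogonal_apply_ne_zero [FiniteDimensional K V] (hω : ω.IsAlt)
    (hnd : ω.SeparatingLeft) {M : End K V} (hM : ω.IsOrthogonal M)
    (hzero : ∀ x, ω x (M x) = 0) (hne : M ≠ .id) :
    ∃ N : End K V, ω.IsOrthogonal N ∧ LinearMap.det N = LinearMap.det M ∧
      eqLocus M .id ≤ eqLocus N .id ∧ ∃ y, ω y (N y) ≠ 0 := by
  obtain ⟨x, hx⟩ : ∃ x, M x ≠ x := by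
    by_contra! h
    exact hne (LinearMap.ext h)
  set u := M x - x with hu
  obtain ⟨y, hy⟩ : ∃ y, ω u y ≠ 0 := by
    by_contra! h
    exact sub_ne_zero.2 hx (hnd u h)
  have hswap (a b : V) : ω a (M b) = -ω b (M a) := by
    have := hzero (a + b)
    simp only [map_add, LinearMap.add_apply, hzero, zero_add, add_zero] at this
    exact eq_neg_of_add_eq_zero_right this
  have huy : ω u (M y) = -ω u y := by
    rw [hu]
    simp only [map_sub, LinearMap.sub_apply, hM x y, hswap x y, ← hω.neg_eq (M x) y]
    ring
  refine ⟨transvection ((1 : K) • ω u) u ∘ₗ M,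
    fun a b => (isOrthogonal_transvection hω u _ _ _).trans (hM a b),
    det_transvection_comp hω u _ M, eqLocus_id_le_transvection_comp hM x _, y, ?_⟩
  rw [LinearMap.comp_apply, transvection.apply, map_add, hzero, zero_add, one_smul, map_smul, huy,
    ← hω.neg_eq u y, smul_neg, neg_smul, neg_neg, smul_eq_mul]
  exact mul_self_ne_zero.2 hy

-- As long as `M ≠ id`, composing with one or two transvections enlarges the fixed space.
lemma det_eq_one_of_isOrthogonal_of_separatingLeft [FiniteDimensional K V] (hω : ω.IsAlt)
    (hnd : ω.SeparatingLeft) {M : End K V} (hM : ω.IsOrthogonal M) : LinearMap.det M = 1 := by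
  induction hF : eqLocus M .id using WellFoundedGT.induction generalizing M with
  | _ F ih =>
  subst hF
  by_cases hne : M = .id
  · rw [hne, LinearMap.det_id]
  obtain ⟨M', hM', hdet', hle, x, hx⟩ : ∃ M' : End K V, ω.IsOrthogonal M' ∧
      LinearMap.det M' = LinearMap.det M ∧ eqLocus M .id ≤ eqLocus M' .id ∧
      ∃ x, ω x (M' x) ≠ 0 := by
    by_cases hzero : ∀ x, ω x (M x) = 0
    · exact exists_isOrthogonal_apply_ne_zero hω hnd hM hzero hne
    · exact ⟨M, hM, rfl, le_rfl, not_forall.1 hzero⟩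
  obtain ⟨N, hN, hdet, hlt⟩ := exists_isOrthogonal_eqLocus_lt_of_apply_ne_zero hω hM' hx
  rw [← hdet', ← hdet]
  exact ih _ (hle.trans_lt hlt) hN rfl

theorem det_eq_one_of_isOrthogonal_of_forall_mem_ker [FiniteDimensional K V] (hω : ω.IsAlt)
    {M : End K V} (hM : ω.IsOrthogonal M) (hfix : ∀ x ∈ ker ω, M x = x) :
    LinearMap.det M = 1 := by
  have hmap : ker ω ≤ (ker ω).comap M := fun x hx => by
    rwa [Submodule.mem_comap, hfix x hx]
  have hrestrict : M.restrict hmap = .id := by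
    ext x
    exact hfix x x.2
  rw [LinearMap.det_eq_det_mul_det (ker ω) M hmap, hrestrict, LinearMap.det_id, one_mul]
  let ω' : LinearMap.BilinForm K (V ⧸ ker ω) := hω.isRefl.liftQ₂ ω (ker ω) le_rfl
  have halt : ω'.IsAlt := by
    rintro ⟨x⟩
    exact hω.self_eq_zero x
  have hsep : ω'.SeparatingLeft := by
    rintro ⟨x⟩ hx
    exact (Submodule.Quotient.mk_eq_zero _).2 (LinearMap.ext fun y => hx (Submodule.Quotient.mk y))
  refine det_eq_one_of_isOrthogonal_of_separatingLeft halt hsep ?_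
  rintro ⟨x⟩ ⟨y⟩
  exact hM x y

end Alternating

/-! ### Removing a point from a permutation -/

section RemovePoint

variable {α β : Type*} {σ τ : Perm α}

lemma sameCycle_map_of_forall {τ : Perm β} {r : α → β}
    (h : ∀ x, τ.SameCycle (r x) (r (σ x))) {x y : α} (hxy : σ.SameCycle x y) :
    τ.SameCycle (r x) (r y) := by
  obtain ⟨k, rfl⟩ := hxy
  induction k with
  | zero => exact .rfl
  | succ k ih =>
    rw [add_comm, zpow_add, zpow_one, Perm.mul_apply]
    exact ih.trans (h _)
  | pred k ih =>
    refine ih.trans (Perm.SameCycle.symm ?_)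
    have := h ((σ ^ (-(k : ℤ) - 1)) x)
    rwa [← Perm.mul_apply, ← zpow_one_add, add_sub_cancel] at this

lemma sameCycle_of_forall (h : ∀ x, τ.SameCycle x (σ x)) {x y : α} (hxy : σ.SameCycle x y) :
    τ.SameCycle x y :=
  sameCycle_map_of_forall (r := id) h hxy

variable [DecidableEq α] {c x y : α}

/-- The permutation `σ` with the point `c` cut out of its cycle: `c` becomes fixed and its
predecessor is sent to its successor. -/
def removePoint (c : α) (σ : Perm α) : Perm α := swap c (σ c) * σ

@[simp]
lemma removePoint_apply_self (c : α) (σ : Perm α) : removePoint c σ c = c := by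
  rw [removePoint, Perm.mul_apply, swap_apply_right]

lemma removePoint_apply_of_apply_eq (hx : σ x = c) : removePoint c σ x = σ c := by
  rw [removePoint, Perm.mul_apply, hx, swap_apply_left]

lemma removePoint_apply_of_ne (hxc : x ≠ c) (hx : σ x ≠ c) : removePoint c σ x = σ x := by
  rw [removePoint, Perm.mul_apply, swap_apply_of_ne_of_ne hx (σ.injective.ne hxc)]

lemma sameCycle_removePoint_iff (hx : x ≠ c) (hy : y ≠ c) :
    (removePoint c σ).SameCycle x y ↔ σ.SameCycle x y := by
  constructor
  · refine sameCycle_of_forall fun w => ?_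
    by_cases hwc : w = c
    · subst hwc
      rw [removePoint_apply_self]
    · by_cases hw : σ w = c
      · rw [removePoint_apply_of_apply_eq hw, ← hw, Perm.sameCycle_apply_right,
          Perm.sameCycle_apply_right]
      · rw [removePoint_apply_of_ne hwc hw, Perm.sameCycle_apply_right]
  · intro h
    have hmap := sameCycle_map_of_forall (τ := removePoint c σ)
      (r := fun w => if w = c then σ c else w) (fun w => ?_) h
    · simpa only [if_neg hx, if_neg hy] using hmap
    · by_cases hwc : w = c
      · subst hwc
        simp only [if_true]
        split_ifs <;> exact .rfl
      · rw [if_neg hwc]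
        split_ifs with hw
        · rw [← removePoint_apply_of_apply_eq hw, Perm.sameCycle_apply_right]
        · rw [← removePoint_apply_of_ne hwc hw, Perm.sameCycle_apply_right]

lemma removePoint_swap_mul (h : σ c = c) : removePoint c (swap c x * σ) = σ := by
  rw [removePoint, Perm.mul_apply, h, swap_apply_left, swap_mul_self_mul]

lemma removePoint_mul_swap (c y : α) (σ : Perm α) :
    removePoint c (σ * swap c y) = removePoint c (swap c (σ y) * σ) := by
  rw [removePoint, removePoint, Perm.mul_apply, swap_apply_left, ← mul_assoc,
    mul_swap_eq_swap_mul, Perm.mul_apply, Perm.mul_apply, swap_apply_right, swap_comm]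

lemma sameCycle_mul_swap_iff (σ : Perm α) (y : α) {x x' : α} (hx : x ≠ c) (hx' : x' ≠ c) :
    (σ * swap c y).SameCycle x x' ↔ (swap c (σ y) * σ).SameCycle x x' := by
  rw [← sameCycle_removePoint_iff hx hx', removePoint_mul_swap,
    sameCycle_removePoint_iff hx hx']

end RemovePoint

section FormPerm

variable {α : Type*} [DecidableEq α] {u v : List α} {w y : α}

lemma formPerm_append_cons_cons (h : (u ++ y :: w :: v).Nodup) :
    (u ++ y :: w :: v).formPerm = swap y w * (u ++ w :: v).formPerm := by
  have hsub : (u ++ w :: v).Nodup :=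
    h.sublist (List.Sublist.append_left (List.sublist_cons_self _ _) _)
  rw [List.formPerm_eq_of_isRotated h List.isRotated_append, List.cons_append, List.cons_append,
    List.formPerm_cons_cons, ← List.cons_append,
    ← List.formPerm_eq_of_isRotated hsub List.isRotated_append]

lemma formPerm_append_cons_cons' (h : (u ++ w :: y :: v).Nodup) :
    (u ++ w :: y :: v).formPerm = (u ++ w :: v).formPerm * swap w y := by
  have hrev : (u ++ w :: y :: v).reverse = v.reverse ++ y :: w :: u.reverse := by simp
  have hrev' : (u ++ w :: v).reverse = v.reverse ++ w :: u.reverse := by simp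
  rw [← List.nodup_reverse, hrev] at h
  have := formPerm_append_cons_cons h
  rw [← hrev, ← hrev', List.formPerm_reverse, List.formPerm_reverse, inv_eq_iff_eq_inv,
    mul_inv_rev, inv_inv, swap_inv, swap_comm] at this
  exact this

end FormPerm

/-! ### Rauzy moves on pairs of words -/

section Words

open Relation

variable {L M : Type*}

/-- Elementary Rauzy moves on a pair of words (top word, bottom word). The last (first) letter of
the bottom word is moved next to the letter of the bottom word that ends (starts) the top word;
`swap` allows the two words to exchange roles. -/
inductive RauzyStep : List L × List L → List L × List L → Prop
  | right (P : List L) (z : L) (R T : List L) (y : L) :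
      RauzyStep (P ++ [z], R ++ z :: (T ++ [y])) (P ++ [z], R ++ z :: y :: T)
  | left (a : L) (P : List L) (y : L) (T R : List L) :
      RauzyStep (a :: P, y :: (T ++ a :: R)) (a :: P, T ++ y :: a :: R)
  | swap {p q : List L × List L} (h : RauzyStep p q) : RauzyStep p.swap q.swap

/-- `Reach p q`: the pair of words `q` is obtained from `p` by a sequence of Rauzy moves. -/
abbrev Reach (p q : List L × List L) : Prop := ReflTransGen RauzyStep p q

/-- The pair of words obtained by renaming every letter through `f`. -/
def mapPair (f : L → M) (p : List L × List L) : List M × List M := (p.1.map f, p.2.map f)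

lemma mapPair_mapPair {N : Type*} (g : M → N) (f : L → M) (p : List L × List L) :
    mapPair g (mapPair f p) = mapPair (g ∘ f) p := by
  simp only [mapPair, List.map_map]

lemma mapPair_id (p : List L × List L) : mapPair id p = p := by
  simp only [mapPair, List.map_id]

variable {p q : List L × List L}

lemma RauzyStep.map (f : L → M) (h : RauzyStep p q) : RauzyStep (mapPair f p) (mapPair f q) := by
  induction h with
  | right P z R T y => simpa [mapPair] using right (P.map f) (f z) (R.map f) (T.map f) (f y)
  | left a P y T R => simpa [mapPair] using left (f a) (P.map f) (f y) (T.map f) (R.map f)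
  | swap _ ih => exact ih.swap

lemma RauzyStep.perm (h : RauzyStep p q) : p.1.Perm q.1 ∧ p.2.Perm q.2 := by
  induction h with
  | right P z R T y =>
    exact ⟨.rfl, ((List.perm_append_singleton y T).cons z).append_left R⟩
  | left a P y T R => exact ⟨.rfl, List.perm_middle.symm⟩
  | swap _ ih => exact ih.symm

lemma Reach.map (f : L → M) (h : Reach p q) : Reach (mapPair f p) (mapPair f q) :=
  ReflTransGen.lift (mapPair f) (fun _ _ => RauzyStep.map f) _ _ h

lemma Reach.swap (h : Reach p q) : Reach p.swap q.swap :=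
  ReflTransGen.lift Prod.swap (fun _ _ => RauzyStep.swap) _ _ h

lemma Reach.perm (h : Reach p q) : p.1.Perm q.1 ∧ p.2.Perm q.2 := by
  induction h with
  | refl => exact ⟨.rfl, .rfl⟩
  | tail _ hstep ih => exact ⟨ih.1.trans hstep.perm.1, ih.2.trans hstep.perm.2⟩

lemma reach_rotate_right (P : List L) (z : L) (R : List L) {T T' : List L} (h : T ~r T') :
    Reach (P ++ [z], R ++ z :: T) (P ++ [z], R ++ z :: T') := by
  obtain ⟨n, rfl⟩ := h.symm
  clear h
  induction n with
  | zero => rw [List.rotate_zero]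
  | succ n ih =>
    refine .trans ?_ ih
    rw [← List.rotate_rotate]
    rcases T'.rotate n with _ | ⟨y, U⟩
    · exact .refl
    · rw [List.rotate_cons_succ, List.rotate_zero]
      exact .single (.right P z R U y)

lemma reach_rotate_left (a : L) (P R : List L) {T T' : List L} (h : T ~r T') :
    Reach (a :: P, T ++ a :: R) (a :: P, T' ++ a :: R) := by
  obtain ⟨n, rfl⟩ := h
  induction n with
  | zero => rw [List.rotate_zero]
  | succ n ih =>
    refine ih.trans ?_
    rw [← List.rotate_rotate]
    rcases T.rotate n with _ | ⟨y, U⟩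
    · exact .refl
    · rw [List.rotate_cons_succ, List.rotate_zero, List.append_assoc]
      exact .single (.left a P y U R)

lemma RauzyStep.reach_symm (h : RauzyStep p q) : Reach q p := by
  induction h with
  | right P z R T y =>
    exact reach_rotate_right P z R (List.isRotated_concat y T).symm
  | left a P y T R =>
    simpa using reach_rotate_left a P R (List.isRotated_concat y T)
  | swap _ ih => exact ih.swap

lemma Reach.symm (h : Reach p q) : Reach q p := by
  induction h with
  | refl => exact .refl
  | tail _ hstep ih => exact hstep.reach_symm.trans ih

/-- The group of renamings of the letters that can be realized by Rauzy moves. -/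
def renamingGroup (p : List L × List L) : Subgroup (Perm L) where
  carrier := {σ | Reach p (mapPair σ p)}
  one_mem' := by
    change Reach p (mapPair id p)
    rw [mapPair_id]
  mul_mem' {σ τ} hσ hτ := by
    have := hσ.trans (hτ.map σ)
    rwa [mapPair_mapPair] at this
  inv_mem' {σ} hσ := by
    have := (hσ.map ⇑σ⁻¹).symm
    rwa [mapPair_mapPair, ← Perm.coe_mul, inv_mul_cancel, Perm.coe_one, mapPair_id] at this

lemma mem_renamingGroup {σ : Perm L} : σ ∈ renamingGroup p ↔ Reach p (mapPair σ p) := Iff.rfl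

lemma Reach.renamingGroup_le (h : Reach p q) : renamingGroup q ≤ renamingGroup p :=
  fun σ hσ => h.trans (.trans hσ (h.map σ).symm)

/-- Both words of the pair list every letter of the alphabet exactly once. -/
def IsLabeled (p : List L × List L) : Prop :=
  (p.1.Nodup ∧ ∀ a, a ∈ p.1) ∧ p.2.Nodup ∧ ∀ a, a ∈ p.2

lemma IsLabeled.swap (h : IsLabeled p) : IsLabeled p.swap := And.symm h

lemma IsLabeled.perm (h : IsLabeled p) : p.1.Perm p.2 :=
  (List.perm_ext_iff_of_nodup h.1.1 h.2.1).2 fun a => iff_of_true (h.1.2 a) (h.2.2 a)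

lemma IsLabeled.of_reach (hp : IsLabeled p) (h : Reach p q) : IsLabeled q :=
  ⟨⟨h.perm.1.nodup_iff.1 hp.1.1, fun a => h.perm.1.mem_iff.1 (hp.1.2 a)⟩,
    h.perm.2.nodup_iff.1 hp.2.1, fun a => h.perm.2.mem_iff.1 (hp.2.2 a)⟩

end Words

/-! ### Irreducible pairs and standard pairs -/

section Standard

variable {L : Type*}

/-- Irreducibility of a pair of words: no proper nonempty prefix of the top word is a permutation
of a prefix of the bottom word. -/
def IsIrreducible (p : List L × List L) : Prop :=
  ∀ u v u' v', p = (u ++ v, u' ++ v') → u.Perm u' → u = [] ∨ v = []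

lemma IsIrreducible.swap {p : List L × List L} (h : IsIrreducible p)
    (hlen : p.1.length = p.2.length) : IsIrreducible p.swap := by
  obtain ⟨p₁, p₂⟩ := p
  intro u v u' v' he hu
  obtain ⟨rfl, rfl⟩ := Prod.mk.inj he
  have hul := hu.length_eq
  have hvl : v.length = v'.length := by
    simp only [List.length_append] at hlen
    omega
  rcases h u' v' u v rfl hu.symm with rfl | rfl
  · exact .inl (List.length_eq_zero_iff.1 hul)
  · exact .inr (List.length_eq_zero_iff.1 hvl)

-- A prefix of the bottom word avoiding `z` is a prefix of `R`, so what follows `z` is irrelevant.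
lemma IsIrreducible.right_congr {P R T : List L} {z : L} (hz : z ∉ P)
    (h : IsIrreducible (P ++ [z], R ++ z :: T)) (T' : List L) :
    IsIrreducible (P ++ [z], R ++ z :: T') := by
  intro u v u' v' he hu
  obtain ⟨hP, hR⟩ := Prod.mk.inj he
  rcases List.eq_nil_or_concat v with rfl | ⟨v, x, rfl⟩
  · exact .inr rfl
  obtain ⟨rfl, -⟩ : P = u ++ v ∧ [z] = [x] := by
    rw [List.concat_eq_append, ← List.append_assoc] at hP
    exact List.append_inj' hP rfl
  have hzu' : z ∉ u' := fun hm => hz (List.mem_append_left _ (hu.mem_iff.2 hm))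
  obtain ⟨w, rfl⟩ : ∃ w, R = u' ++ w := by
    rcases List.append_eq_append_iff.1 hR with ⟨w, rfl, hw⟩ | ⟨w, hw, -⟩
    · rcases w with _ | ⟨b, w⟩
      · exact ⟨[], by simp⟩
      · obtain ⟨rfl, -⟩ := List.cons.inj hw
        exact absurd (by simp) hzu'
    · exact ⟨w, hw⟩
  rcases h u (v ++ [z]) u' (w ++ z :: T) (by simp) hu with hnil | hnil
  · exact .inl hnil
  · simp at hnil

lemma exists_isRotated_concat {l : List L} {b : L} (hb : b ∈ l) : ∃ l', l ~r l' ++ [b] := by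
  obtain ⟨s, t, rfl⟩ := List.append_of_mem hb
  exact ⟨t ++ s, by simpa using List.isRotated_append (l := s ++ [b]) (l' := t)⟩

lemma exists_isRotated_cons {l : List L} {b : L} (hb : b ∈ l) : ∃ l', l ~r b :: l' := by
  obtain ⟨s, t, rfl⟩ := List.append_of_mem hb
  exact ⟨t ++ s, List.isRotated_append⟩

lemma notMem_of_nodup_append_singleton {P : List L} {z : L} (h : (P ++ [z]).Nodup) : z ∉ P :=
  fun hz => (List.nodup_append.1 h).2.2 _ hz _ (List.mem_singleton_self z) rfl

lemma isIrreducible_standard {a : L} {U V : List L} (hl : IsLabeled (a :: U, V ++ [a])) :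
    IsIrreducible (a :: U, V ++ [a]) := by
  intro u v u' v' he hu
  obtain ⟨htop, hbot⟩ := Prod.mk.inj he
  refine or_iff_not_imp_left.2 fun hne => ?_
  have hau : a ∈ u' := by
    obtain ⟨b, t, rfl⟩ := List.exists_cons_of_ne_nil hne
    rw [List.cons_append, List.cons.injEq] at htop
    exact hu.subset (htop.1 ▸ List.mem_cons_self)
  have hv' : v' = [] := by
    obtain rfl | ⟨t, z, rfl⟩ := List.eq_nil_or_concat' v'
    · rfl
    · rw [← List.append_assoc] at hbot
      obtain ⟨rfl, -⟩ := List.append_inj' hbot rfl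
      exact absurd (List.mem_append_left t hau) (notMem_of_nodup_append_singleton hl.2.1)
  have hlen : (a :: U).length = (V ++ [a]).length := hl.perm.length_eq
  rw [htop, hbot, hv', List.append_nil, List.length_append, hu.length_eq] at hlen
  exact List.length_eq_zero_iff.1 (by omega)

lemma IsIrreducible.exists_split {P R T : List L} {z : L}
    (hl : IsLabeled (P ++ [z], R ++ z :: T)) (hi : IsIrreducible (P ++ [z], R ++ z :: T))
    (hR : R ≠ []) :
    ∃ Q y W c, P ++ [z] = Q ++ y :: W ∧ y ∈ T ∧ c ∈ R ∧ c ∈ W := by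
  classical
  have hmem : ∀ a, a ∈ R ↔ a ∉ z :: T := fun a => by
    have := hl.2.2 a
    have := List.nodup_append.1 hl.2.1
    grind
  have hperm {Q W : List L} (hQW : P ++ [z] = Q ++ W) (hW : W ≠ []) (hQR : ∀ a, a ∈ Q ↔ a ∈ R) :
      False := by
    have hQ : Q.Nodup := by
      have := hl.1.1
      rw [hQW] at this
      exact this.of_append_left
    have hp : Q.Perm R := (List.perm_ext_iff_of_nodup hQ hl.2.1.of_append_left).2 hQR
    rcases hi Q W R (z :: T) (by rw [hQW]) hp with rfl | hnil
    · exact hR (List.nil_perm.1 hp)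
    · exact hW hnil
  rcases hfind : (P ++ [z]).find? (· ∈ T) with _ | y
  · refine (hperm rfl (List.cons_ne_nil z []) fun a => ?_).elim
    rw [List.find?_eq_none] at hfind
    have := hl.1.2 a
    have := List.nodup_append.1 hl.1.1
    grind
  obtain ⟨hy, Q, W, hQW, hQ⟩ := List.find?_eq_some_iff_append.1 hfind
  by_contra! hnone
  refine hperm hQW (List.cons_ne_nil y W) fun a => ?_
  have hW : a ∈ R → a ∉ W := fun ha => hnone Q y W a hQW (by simpa using hy) ha
  have hz : z ∉ Q := by
    have hlast : z ∈ y :: W := by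
      have := congrArg List.getLast? hQW
      simp only [List.getLast?_append, List.getLast?_singleton, Option.some_or] at this
      grind
    have := hl.1.1
    rw [hQW] at this
    have := List.nodup_append.1 this
    grind
  have := hl.1.2 a
  grind

lemma IsIrreducible.exists_reach_lt {P R T : List L} {z : L}
    (hl : IsLabeled (P ++ [z], R ++ z :: T)) (hi : IsIrreducible (P ++ [z], R ++ z :: T))
    (hR : R ≠ []) :
    ∃ P' c R' T', Reach (P ++ [z], R ++ z :: T) (P' ++ [c], R' ++ c :: T') ∧
      IsIrreducible (P' ++ [c], R' ++ c :: T') ∧ R'.length < R.length := by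
  obtain ⟨Q, y, W, c, hQW, hy, hcR, hcW⟩ := hi.exists_split hl hR
  obtain ⟨T', hT'⟩ := exists_isRotated_concat hy
  obtain ⟨W', hW'⟩ := exists_isRotated_concat hcW
  obtain ⟨R', R'', rfl⟩ := List.append_of_mem hcR
  have hfirst := reach_rotate_right P z (R' ++ c :: R'') hT'
  have hl₁ := hl.of_reach hfirst
  have hi₁ := (hi.right_congr (notMem_of_nodup_append_singleton hl.1.1) (T' ++ [y])).swap
    hl₁.perm.length_eq
  have hbot : R' ++ c :: R'' ++ z :: (T' ++ [y]) = (R' ++ c :: R'' ++ z :: T') ++ [y] := by simp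
  rw [hbot, hQW] at hfirst hl₁ hi₁
  have hsecond := (reach_rotate_right (R' ++ c :: R'' ++ z :: T') y Q hW').swap
  have hl₂ := (hl₁.of_reach hsecond).swap
  have hi₂ := (hi₁.right_congr (notMem_of_nodup_append_singleton hl₁.2.1) (W' ++ [c])).swap
    hl₂.perm.length_eq
  refine ⟨Q ++ y :: W', c, R', R'' ++ z :: T' ++ [y], ?_, ?_, by simp⟩
  · rw [hQW]
    simpa using hfirst.trans hsecond
  · simpa using hi₂

theorem IsIrreducible.exists_reach_standard_of_length {n : ℕ} {P R T : List L} {z : L}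
    (hl : IsLabeled (P ++ [z], R ++ z :: T)) (hi : IsIrreducible (P ++ [z], R ++ z :: T))
    (hn : R.length = n) : ∃ a U V, Reach (P ++ [z], R ++ z :: T) (a :: U, V ++ [a]) := by
  induction n using Nat.strong_induction_on generalizing P R T z with
  | _ n ih =>
  by_cases hR : R = []
  · subst hR
    rcases P with _ | ⟨a, P⟩
    · have hT : T = [] := by
        have := hl.perm.length_eq
        simpa using this
      subst hT
      exact ⟨z, [], [], .refl⟩
    · have ha : a ∈ T := by
        have hmem := hl.2.2 a
        have hnodup := hl.1.1
        grind
      obtain ⟨T', hT'⟩ := exists_isRotated_concat ha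
      exact ⟨a, P ++ [z], z :: T', by simpa using reach_rotate_right (a :: P) z [] hT'⟩
  · obtain ⟨P', c, R', T', hreach, hi', hlt⟩ := hi.exists_reach_lt hl hR
    obtain ⟨a, U, V, h⟩ := ih _ (hn ▸ hlt) (hl.of_reach hreach) hi' rfl
    exact ⟨a, U, V, hreach.trans h⟩

theorem IsIrreducible.exists_reach_standard [Nonempty L] {p : List L × List L}
    (hi : IsIrreducible p) (hl : IsLabeled p) : ∃ a U V, Reach p (a :: U, V ++ [a]) := by
  obtain ⟨p₁, p₂⟩ := p
  rcases List.eq_nil_or_concat p₁ with rfl | ⟨P, z, rfl⟩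
  · exact absurd (hl.1.2 (Classical.arbitrary L)) List.not_mem_nil
  · obtain ⟨R, T, rfl⟩ := List.append_of_mem (hl.2.2 z)
    rw [List.concat_eq_append] at hi hl ⊢
    exact hi.exists_reach_standard_of_length hl rfl

end Standard

/-! ### The renaming group contains the alternating group -/

section Alternating

variable {L : Type*}

lemma reach_rotate_standard (a : L) {U U' V V' : List L} (hU : U ~r U') (hV : V ~r V') :
    Reach (a :: U, V ++ [a]) (a :: U', V' ++ [a]) :=
  (reach_rotate_right V a [] hU).swap.trans (reach_rotate_left a U' [] hV)

lemma reach_exchange_standard (a b c : L) (u₁ u₂ v₁ v₂ : List L) :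
    Reach (a :: (u₁ ++ c :: (u₂ ++ [b])), (b :: (v₁ ++ c :: v₂)) ++ [a])
      (c :: (u₂ ++ a :: (u₁ ++ [b])), (b :: (v₂ ++ a :: v₁)) ++ [c]) := by
  have hU : a :: (u₁ ++ c :: u₂) ~r c :: (u₂ ++ a :: u₁) := by
    simpa using List.isRotated_append (l := a :: u₁) (l' := c :: u₂)
  have hV : v₁ ++ c :: (v₂ ++ [a]) ~r v₂ ++ a :: (v₁ ++ [c]) := by
    simpa using List.isRotated_append (l := v₁ ++ [c]) (l' := v₂ ++ [a])
  simpa using (reach_rotate_right (a :: (u₁ ++ c :: u₂)) b [] hV).trans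
    (reach_rotate_left b (v₂ ++ a :: (v₁ ++ [c])) [] hU).swap

lemma exists_reach_standard_split {a b c : L} {U V : List L} (hl : IsLabeled (a :: U, V ++ [a]))
    (hba : b ≠ a) (hca : c ≠ a) (hbc : b ≠ c) :
    ∃ u₁ u₂ v₁ v₂, Reach (a :: U, V ++ [a])
      (a :: (u₁ ++ c :: (u₂ ++ [b])), (b :: (v₁ ++ c :: v₂)) ++ [a]) := by
  have hU {x : L} (hx : x ≠ a) : x ∈ U := by simpa [hx] using hl.1.2 x
  have hV {x : L} (hx : x ≠ a) : x ∈ V := by simpa [hx] using hl.2.2 x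
  obtain ⟨U', hU'⟩ := exists_isRotated_concat (hU hba)
  obtain ⟨V', hV'⟩ := exists_isRotated_cons (hV hba)
  have hcU : c ∈ U' := by simpa [hbc.symm] using hU'.mem_iff.1 (hU hca)
  have hcV : c ∈ V' := by simpa [hbc.symm] using hV'.mem_iff.1 (hV hca)
  obtain ⟨u₁, u₂, rfl⟩ := List.append_of_mem hcU
  obtain ⟨v₁, v₂, rfl⟩ := List.append_of_mem hcV
  exact ⟨u₁, u₂, v₁, v₂, by simpa using reach_rotate_standard a hU' hV'⟩

lemma reach_standard_of_ne {a b c : L} {U V : List L} (hl : IsLabeled (a :: U, V ++ [a]))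
    (hba : b ≠ a) (hbc : b ≠ c) : ∃ U' V', Reach (a :: U, V ++ [a]) (c :: U', V' ++ [c]) := by
  by_cases hca : c = a
  · subst hca
    exact ⟨U, V, .refl⟩
  · obtain ⟨u₁, u₂, v₁, v₂, h⟩ := exists_reach_standard_split hl hba hca hbc
    exact ⟨_, _, h.trans (reach_exchange_standard a b c u₁ u₂ v₁ v₂)⟩

lemma mem_renamingGroup_of_threeCycle {a b c : L} {U V : List L} {σ : Perm L}
    (hl : IsLabeled (a :: U, V ++ [a])) (hba : b ≠ a) (hca : c ≠ a) (hbc : b ≠ c)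
    (hσa : σ a = c) (hσc : σ c = b) (hσb : σ b = a)
    (hσ : ∀ x, x ≠ a → x ≠ b → x ≠ c → σ x = x) : σ ∈ renamingGroup (a :: U, V ++ [a]) := by
  obtain ⟨u₁, u₂, v₁, v₂, h⟩ := exists_reach_standard_split hl hba hca hbc
  refine h.renamingGroup_le ?_
  obtain ⟨⟨htop, -⟩, hbot, -⟩ := hl.of_reach h
  simp only [List.nodup_cons, List.nodup_append, List.mem_append, List.mem_cons,
    List.cons_append] at htop hbot
  have hmap {l : List L} (hl : a ∉ l ∧ b ∉ l ∧ c ∉ l) : l.map σ = l :=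
    List.map_congr_left (g := id) (fun x hx => hσ x (by grind) (by grind) (by grind))
      |>.trans (List.map_id l)
  have hu₁ : u₁.map σ = u₁ := hmap (by grind)
  have hu₂ : u₂.map σ = u₂ := hmap (by grind)
  have hv₁ : v₁.map σ = v₁ := hmap (by grind)
  have hv₂ : v₂.map σ = v₂ := hmap (by grind)
  have hrotU : u₂ ++ a :: (u₁ ++ [b]) ~r u₁ ++ b :: (u₂ ++ [a]) := by
    simpa using List.isRotated_append (l := u₂ ++ [a]) (l' := u₁ ++ [b])
  have hrotV : b :: (v₂ ++ a :: v₁) ~r a :: (v₁ ++ b :: v₂) := by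
    simpa using List.isRotated_append (l := b :: v₂) (l' := a :: v₁)
  refine (reach_exchange_standard a b c u₁ u₂ v₁ v₂).trans ?_
  simpa [mapPair, hσa, hσb, hσc, hu₁, hu₂, hv₁, hv₂] using reach_rotate_standard c hrotU hrotV

theorem alternatingGroup_le_renamingGroup [Fintype L] [DecidableEq L] [Nonempty L]
    {p : List L × List L} (hl : IsLabeled p) (hi : IsIrreducible p) :
    alternatingGroup L ≤ renamingGroup p := by
  obtain ⟨a, U, V, hstd⟩ := hi.exists_reach_standard hl
  rw [← Perm.closure_three_cycles_eq_alternating, Subgroup.closure_le]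
  intro σ (hσ : σ.IsThreeCycle)
  obtain ⟨x, hx⟩ : σ.support.Nonempty := by
    rw [← Finset.card_pos, hσ.card_support]
    exact three_pos
  have hnodup : [x, σ x, σ (σ x)].Nodup := hσ.nodup_iff_mem_support.2 hx
  have hfix (w : L) (hw : w ≠ x) (hw' : w ≠ σ (σ x)) (hw'' : w ≠ σ x) : σ w = w := by
    rw [← Perm.notMem_support, hσ.support_eq_iff_mem_support.2 hx]
    grind
  have hcube : σ (σ (σ x)) = x := by
    have := congrArg (· x) (hσ.orderOf ▸ pow_orderOf_eq_one σ)
    simpa [pow_succ] using this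
  obtain ⟨b, hba, hbx⟩ : ∃ b, b ≠ a ∧ b ≠ x := by
    by_cases h : σ x = a
    · exact ⟨σ (σ x), by grind, by grind⟩
    · exact ⟨σ x, h, by grind⟩
  have hl' := hl.of_reach hstd
  obtain ⟨U', V', hx'⟩ := reach_standard_of_ne hl' hba hbx
  exact Reach.renamingGroup_le (hstd.trans hx')
    (mem_renamingGroup_of_threeCycle (hl'.of_reach hx')
      (by grind) (by grind) (by grind) rfl rfl hcube hfix)

end Alternating

/-! ### The vertex permutation -/

section FormPermMap

variable {α : Type*} [DecidableEq α]

lemma formPerm_map_perm (σ : Perm α) (l : List α) :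
    (l.map σ).formPerm = σ * l.formPerm * σ⁻¹ := by
  induction l with
  | nil => simp
  | cons x l ih =>
    rcases l with _ | ⟨y, l⟩
    · simp
    · rw [List.map_cons, List.map_cons, List.formPerm_cons_cons, ← List.map_cons, ih,
        swap_apply_apply, List.formPerm_cons_cons]
      group

end FormPermMap

section Vertex

variable {L : Type*}

lemma nodup_none_cons_map_some {l : List L} : (none :: l.map some).Nodup ↔ l.Nodup := by
  simp [List.nodup_map_iff (Option.some_injective L)]

variable [DecidableEq L]

/-- The cyclic successor permutation of a word, where `none` plays the role of the separator
between the end of the word and its beginning. -/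
def wordCycle (l : List L) : Perm (Option L) := (none :: l.map some).formPerm

lemma wordCycle_append_cons_cons {u v : List L} {w y : L} (h : (u ++ y :: w :: v).Nodup) :
    wordCycle (u ++ y :: w :: v) = swap (some y) (some w) * wordCycle (u ++ w :: v) := by
  rw [← nodup_none_cons_map_some, List.map_append, ← List.cons_append] at h
  simpa [wordCycle] using formPerm_append_cons_cons h

lemma wordCycle_append_cons_cons' {u v : List L} {w y : L} (h : (u ++ w :: y :: v).Nodup) :
    wordCycle (u ++ w :: y :: v) = wordCycle (u ++ w :: v) * swap (some w) (some y) := by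
  rw [← nodup_none_cons_map_some, List.map_append, ← List.cons_append] at h
  simpa [wordCycle] using formPerm_append_cons_cons' h

lemma wordCycle_cons {l : List L} {y : L} (h : (y :: l).Nodup) :
    wordCycle (y :: l) = wordCycle l * swap none (some y) :=
  formPerm_append_cons_cons' (u := []) (nodup_none_cons_map_some.2 h)

lemma wordCycle_concat {l : List L} {y : L} (h : (l ++ [y]).Nodup) :
    wordCycle (l ++ [y]) = swap (some y) none * wordCycle l := by
  have hrot : none :: (l ++ [y]).map some ~r some y :: none :: l.map some := by
    simpa using List.isRotated_append (l := none :: l.map some) (l' := [some y])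
  rw [← nodup_none_cons_map_some] at h
  rw [wordCycle, List.formPerm_eq_of_isRotated h hrot, List.formPerm_cons_cons, wordCycle]

lemma wordCycle_apply_of_notMem {l : List L} {y : L} (h : y ∉ l) :
    wordCycle l (some y) = some y :=
  List.formPerm_apply_of_notMem (by simpa using h)

lemma wordCycle_cons_apply_none {l : List L} {a : L} (h : (a :: l).Nodup) :
    wordCycle (a :: l) none = some a := by
  rw [wordCycle_cons h, Perm.mul_apply, swap_apply_left,
    wordCycle_apply_of_notMem (List.nodup_cons.1 h).1]

lemma wordCycle_concat_apply_last {l : List L} {z : L} (h : (l ++ [z]).Nodup) :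
    wordCycle (l ++ [z]) (some z) = none := by
  rw [wordCycle_concat h, Perm.mul_apply,
    wordCycle_apply_of_notMem (notMem_of_nodup_append_singleton h), swap_apply_left]

lemma wordCycle_append_cons_cons_apply {u v : List L} {b c : L} (h : (u ++ b :: c :: v).Nodup) :
    wordCycle (u ++ b :: c :: v) (some b) = some c := by
  have hc : c ∉ u ++ b :: v := by grind
  rw [wordCycle_append_cons_cons' h, Perm.mul_apply, swap_apply_left,
    wordCycle_apply_of_notMem hc]

lemma wordCycle_map (σ : Perm L) (l : List L) :
    wordCycle (l.map σ) = optionCongr σ * wordCycle l * (optionCongr σ)⁻¹ := by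
  rw [wordCycle, wordCycle, ← formPerm_map_perm, List.map_cons, List.map_map, List.map_map]
  rfl

/-- The permutation whose cycles are the vertices of the surface suspended over the pair `p`: it
sends the bottom successor of a letter to its top successor. -/
def vertexPerm (p : List L × List L) : Perm (Option L) := wordCycle p.1 * (wordCycle p.2)⁻¹

variable {p : List L × List L}

lemma vertexPerm_wordCycle (p : List L × List L) (x : Option L) :
    vertexPerm p (wordCycle p.2 x) = wordCycle p.1 x := by
  rw [vertexPerm, Perm.mul_apply, Perm.inv_def, symm_apply_apply]

lemma vertexPerm_swap (p : List L × List L) : vertexPerm p.swap = (vertexPerm p)⁻¹ := by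
  rw [vertexPerm, vertexPerm, mul_inv_rev, inv_inv, Prod.fst_swap, Prod.snd_swap]

lemma vertexPerm_mapPair (σ : Perm L) (p : List L × List L) :
    vertexPerm (mapPair σ p) = optionCongr σ * vertexPerm p * (optionCongr σ)⁻¹ := by
  rw [vertexPerm, vertexPerm, mapPair, wordCycle_map, wordCycle_map]
  group

lemma exists_vertexPerm_right {P R T : List L} {z y : L}
    (hl : IsLabeled (P ++ [z], R ++ z :: (T ++ [y]))) :
    ∃ δ : Perm (Option L), δ (some y) = wordCycle (P ++ [z]) (some y) ∧
      vertexPerm (P ++ [z], R ++ z :: (T ++ [y])) = δ * swap none (some y) ∧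
      vertexPerm (P ++ [z], R ++ z :: y :: T) = swap none (δ (some y)) * δ := by
  have hbot := hl.2.1
  have hy : y ∉ R ++ z :: T := by grind
  have hδ : (wordCycle (P ++ [z]) * (wordCycle (R ++ z :: T))⁻¹) (some y) =
      wordCycle (P ++ [z]) (some y) := by
    rw [Perm.mul_apply, Perm.inv_eq_iff_eq.2 (wordCycle_apply_of_notMem hy).symm]
  have hassoc : R ++ z :: (T ++ [y]) = (R ++ z :: T) ++ [y] := by simp
  refine ⟨wordCycle (P ++ [z]) * (wordCycle (R ++ z :: T))⁻¹, hδ, ?_, ?_⟩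
  · rw [hassoc, vertexPerm, wordCycle_concat (l := R ++ z :: T) (hassoc ▸ hbot), mul_inv_rev,
      swap_inv, swap_comm, mul_assoc]
  · have hbot' := (hl.of_reach (.single (.right P z R T y))).2.1
    rw [hδ, vertexPerm, wordCycle_append_cons_cons' hbot', mul_inv_rev, swap_inv, ← mul_assoc,
      mul_swap_eq_swap_mul, wordCycle_concat_apply_last hl.1.1, mul_assoc]

lemma exists_vertexPerm_left {P R T : List L} {a y : L}
    (hl : IsLabeled (a :: P, y :: (T ++ a :: R))) :
    ∃ δ : Perm (Option L), δ (some y) = wordCycle (a :: P) (some y) ∧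
      vertexPerm (a :: P, y :: (T ++ a :: R)) = swap (some a) (δ (some y)) * δ ∧
      vertexPerm (a :: P, T ++ y :: a :: R) = δ * swap (some a) (some y) := by
  have hy : y ∉ T ++ a :: R := (List.nodup_cons.1 hl.2.1).1
  have hδ : (wordCycle (a :: P) * (wordCycle (T ++ a :: R))⁻¹) (some y) =
      wordCycle (a :: P) (some y) := by
    rw [Perm.mul_apply, Perm.inv_eq_iff_eq.2 (wordCycle_apply_of_notMem hy).symm]
  refine ⟨wordCycle (a :: P) * (wordCycle (T ++ a :: R))⁻¹, hδ, ?_, ?_⟩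
  · rw [hδ, vertexPerm, wordCycle_cons hl.2.1, mul_inv_rev, swap_inv, ← mul_assoc,
      mul_swap_eq_swap_mul, wordCycle_cons_apply_none hl.1.1, mul_assoc]
  · have hbot' := (hl.of_reach (.single (.left a P y T R))).2.1
    rw [vertexPerm, wordCycle_append_cons_cons hbot', mul_inv_rev, swap_inv, swap_comm, mul_assoc]

/-- The angle of the vertex containing `x`, as the number of letters in the cycle of `x` under the
vertex permutation. The first letter of the top word is discarded, which makes the count invariant
under all Rauzy moves. -/
noncomputable def vertexAngle (p : List L × List L) (x : Option L) : ℕ :=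
  {b : L | some b ≠ wordCycle p.1 none ∧ (vertexPerm p).SameCycle x (some b)}.ncard

lemma vertexAngle_eq_of_sameCycle {x y : Option L} (h : (vertexPerm p).SameCycle x y) :
    vertexAngle p x = vertexAngle p y := by
  have (b : L) : (vertexPerm p).SameCycle x (some b) ↔ (vertexPerm p).SameCycle y (some b) :=
    ⟨h.symm.trans, h.trans⟩
  simp only [vertexAngle, this]

lemma vertexAngle_wordCycle (p : List L × List L) (x : Option L) :
    vertexAngle p (wordCycle p.2 x) = vertexAngle p (wordCycle p.1 x) := by
  refine vertexAngle_eq_of_sameCycle ?_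
  rw [← vertexPerm_wordCycle, Perm.sameCycle_apply_right]

-- Both words start at the same vertex, so discarding either first letter gives the same count.
lemma vertexAngle_swap (hl : IsLabeled p) (x : Option L) :
    vertexAngle p.swap x = vertexAngle p x := by
  obtain ⟨l₁, l₂⟩ := p
  rcases l₁ with _ | ⟨a, l₁⟩
  · have : IsEmpty L := ⟨fun a => List.not_mem_nil (hl.1.2 a)⟩
    exact congrArg Set.ncard (Subsingleton.elim _ _)
  rcases l₂ with _ | ⟨b, l₂⟩
  · exact absurd (hl.2.2 a) List.not_mem_nil
  have hab : (vertexPerm (a :: l₁, b :: l₂)).SameCycle (some a) (some b) := by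
    have := vertexPerm_wordCycle (a :: l₁, b :: l₂) none
    rw [wordCycle_cons_apply_none hl.1.1, wordCycle_cons_apply_none hl.2.1] at this
    rw [← this, Perm.sameCycle_apply_left]
  have hswap (c : L) : (vertexPerm (a :: l₁, b :: l₂)).SameCycle (some c) (some (swap a b c)) := by
    rw [swap_apply_def]
    split_ifs with hca hcb
    · exact hca ▸ hab
    · exact hcb ▸ hab.symm
    · exact .rfl
  rw [vertexAngle, vertexAngle, ← Set.ncard_image_of_injective _ (swap a b).injective,
    (swap a b).image_eq_preimage_symm]
  congr 1
  ext c
  rw [Prod.swap_prod_mk, Set.mem_preimage, symm_swap, Set.mem_ofPred_eq, Set.mem_ofPred_eq,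
    wordCycle_cons_apply_none hl.1.1, wordCycle_cons_apply_none hl.2.1, Ne, Ne, Option.some_inj,
    Option.some_inj, swap_apply_eq_iff, swap_apply_right, ← Prod.swap_prod_mk, vertexPerm_swap,
    Perm.sameCycle_inv]
  exact and_congr_right fun _ => ⟨fun h => h.trans (hswap c).symm, fun h => h.trans (hswap c)⟩

lemma vertexAngle_mapPair (σ : Perm L) (p : List L × List L) (x : Option L) :
    vertexAngle (mapPair σ p) (optionCongr σ x) = vertexAngle p x := by
  refine Eq.trans ?_ (Set.ncard_image_of_injective _ σ.injective)
  rw [vertexAngle, σ.image_eq_preimage_symm]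
  congr 1
  ext c
  have hc : some c = optionCongr σ (some (σ.symm c)) := by simp
  have hfirst : wordCycle (p.1.map σ) none = optionCongr σ (wordCycle p.1 none) := by
    rw [wordCycle_map]
    rfl
  rw [Set.mem_preimage, Set.mem_ofPred_eq, Set.mem_ofPred_eq, vertexPerm_mapPair,
    Perm.sameCycle_conj, hc, Perm.inv_def, symm_apply_apply, symm_apply_apply, mapPair, hfirst,
    (optionCongr σ).injective.ne_iff]

end Vertex

/-! ### Vertex angles under Rauzy moves -/

section AngleInvariance

variable {L : Type*} [DecidableEq L] {P R T : List L} {y : L}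

section Right

variable {z : L} (hl : IsLabeled (P ++ [z], R ++ z :: (T ++ [y])))
include hl

lemma vertexAngle_right_some (b : L) :
    vertexAngle (P ++ [z], R ++ z :: y :: T) (some b) =
      vertexAngle (P ++ [z], R ++ z :: (T ++ [y])) (some b) := by
  obtain ⟨δ, -, hp, hq⟩ := exists_vertexPerm_right hl
  simp only [vertexAngle, hp, hq,
    sameCycle_mul_swap_iff δ (some y) (Option.some_ne_none _) (Option.some_ne_none _)]

lemma vertexAngle_right_none :
    vertexAngle (P ++ [z], R ++ z :: y :: T) none =
      vertexAngle (P ++ [z], R ++ z :: (T ++ [y])) (some y) := by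
  obtain ⟨δ, -, -, hq⟩ := exists_vertexPerm_right hl
  rw [← vertexAngle_right_some hl]
  refine (vertexAngle_eq_of_sameCycle ?_).symm
  rw [← Perm.sameCycle_apply_left, hq, Perm.mul_apply, swap_apply_right]

lemma vertexAngle_none_of_right :
    vertexAngle (P ++ [z], R ++ z :: (T ++ [y])) none =
      vertexAngle (P ++ [z], R ++ z :: (T ++ [y])) (wordCycle (P ++ [z]) (some y)) := by
  obtain ⟨δ, hδ, hp, -⟩ := exists_vertexPerm_right hl
  refine vertexAngle_eq_of_sameCycle ?_
  rw [← Perm.sameCycle_apply_left, hp, Perm.mul_apply, swap_apply_left, hδ]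

end Right

section Left

variable {a : L} (hl : IsLabeled (a :: P, y :: (T ++ a :: R)))
include hl

lemma vertexAngle_left_of_ne {x : Option L} (hx : x ≠ some a) :
    vertexAngle (a :: P, T ++ y :: a :: R) x = vertexAngle (a :: P, y :: (T ++ a :: R)) x := by
  obtain ⟨δ, -, hp, hq⟩ := exists_vertexPerm_left hl
  rw [vertexAngle, vertexAngle, wordCycle_cons_apply_none hl.1.1, hp, hq]
  congr 1
  ext b
  exact and_congr_right fun hb => sameCycle_mul_swap_iff δ (some y) hx hb

lemma vertexAngle_left_first (hy : wordCycle (a :: P) (some y) ≠ some a) :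
    vertexAngle (a :: P, T ++ y :: a :: R) (some a) =
      vertexAngle (a :: P, y :: (T ++ a :: R)) (wordCycle (a :: P) (some y)) := by
  obtain ⟨δ, hδ, -, hq⟩ := exists_vertexPerm_left hl
  rw [← vertexAngle_left_of_ne hl hy]
  refine vertexAngle_eq_of_sameCycle ?_
  rw [← Perm.sameCycle_apply_left, hq, Perm.mul_apply, swap_apply_left, hδ]

lemma vertexAngle_first_of_left :
    vertexAngle (a :: P, y :: (T ++ a :: R)) (some a) =
      vertexAngle (a :: P, y :: (T ++ a :: R)) (some y) := by
  obtain ⟨δ, -, hp, -⟩ := exists_vertexPerm_left hl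
  refine (vertexAngle_eq_of_sameCycle ?_).symm
  rw [← Perm.sameCycle_apply_left, hp, Perm.mul_apply, swap_apply_right]

end Left

end AngleInvariance

/-! ### The intersection form of a pair of words -/

section Form

variable {L : Type*}

/-- The linear form adding up the coordinates indexed by the letters of a word. -/
def wordSum (l : List L) : (L → ℚ) →ₗ[ℚ] ℚ := (l.map fun a => LinearMap.proj a).sum

/-- The bilinear form `∑ x a * y b` over all pairs of positions `a` before `b` of a word. -/
def wordForm : List L → LinearMap.BilinForm ℚ (L → ℚ)
  | [] => 0
  | a :: l => LinearMap.BilinForm.linMulLin (LinearMap.proj a) (wordSum l) + wordForm l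

/-- The intersection form of a pair of words, as a difference of the forms of the two words. -/
def intersectionForm (p : List L × List L) : LinearMap.BilinForm ℚ (L → ℚ) :=
  wordForm p.1 - wordForm p.2

lemma intersectionForm_apply (p : List L × List L) (x y : L → ℚ) :
    intersectionForm p x y = wordForm p.1 x y - wordForm p.2 x y := rfl

@[simp]
lemma wordSum_nil (x : L → ℚ) : wordSum [] x = 0 := rfl

@[simp]
lemma wordSum_cons (a : L) (l : List L) (x : L → ℚ) : wordSum (a :: l) x = x a + wordSum l x := by
  simp [wordSum]

@[simp]
lemma wordSum_append (l l' : List L) (x : L → ℚ) :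
    wordSum (l ++ l') x = wordSum l x + wordSum l' x := by
  simp [wordSum]

@[simp]
lemma wordForm_nil (x y : L → ℚ) : wordForm [] x y = 0 := rfl

@[simp]
lemma wordForm_cons (a : L) (l : List L) (x y : L → ℚ) :
    wordForm (a :: l) x y = x a * wordSum l y + wordForm l x y := rfl

@[simp]
lemma wordForm_append (l l' : List L) (x y : L → ℚ) :
    wordForm (l ++ l') x y = wordForm l x y + wordForm l' x y + wordSum l x * wordSum l' y := by
  induction l with
  | nil => simp
  | cons a l ih =>
    simp only [List.cons_append, wordForm_cons, ih, wordSum_append, wordSum_cons]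
    ring

lemma wordSum_congr {l : List L} {x y : L → ℚ} (h : ∀ a ∈ l, x a = y a) :
    wordSum l x = wordSum l y := by
  induction l with
  | nil => rfl
  | cons a l ih =>
    rw [wordSum_cons, wordSum_cons, h a (by simp), ih fun b hb => h b (by simp [hb])]

lemma wordForm_congr {l : List L} {x y x' y' : L → ℚ} (hx : ∀ a ∈ l, x a = x' a)
    (hy : ∀ a ∈ l, y a = y' a) : wordForm l x y = wordForm l x' y' := by
  induction l with
  | nil => rfl
  | cons a l ih =>
    rw [wordForm_cons, wordForm_cons, hx a (by simp),
      wordSum_congr fun b hb => hy b (by simp [hb]),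
      ih (fun b hb => hx b (by simp [hb])) fun b hb => hy b (by simp [hb])]

lemma wordSum_perm {l l' : List L} (h : l.Perm l') : wordSum l = wordSum l' :=
  (h.map _).sum_eq

lemma wordSum_map (σ : L → L) (l : List L) (x : L → ℚ) :
    wordSum (l.map σ) x = wordSum l (x ∘ σ) := by
  induction l with
  | nil => rfl
  | cons a l ih => simp [ih]

lemma wordForm_map (σ : L → L) (l : List L) (x y : L → ℚ) :
    wordForm (l.map σ) x y = wordForm l (x ∘ σ) (y ∘ σ) := by
  induction l with
  | nil => rfl
  | cons a l ih => simp [ih, wordSum_map]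

lemma wordForm_self_perm {l l' : List L} (h : l.Perm l') (x : L → ℚ) :
    wordForm l x x = wordForm l' x x := by
  induction h with
  | nil => rfl
  | cons a h ih => rw [wordForm_cons, wordForm_cons, ih, wordSum_perm h]
  | swap a b l =>
    simp only [wordForm_cons, wordSum_cons]
    ring
  | trans _ _ ih ih' => exact ih.trans ih'

lemma isAlt_intersectionForm {p : List L × List L} (h : p.1.Perm p.2) :
    (intersectionForm p).IsAlt := fun x => by
  rw [intersectionForm_apply, wordForm_self_perm h, sub_self]

lemma intersectionForm_mapPair (σ : L → L) (p : List L × List L) (x y : L → ℚ) :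
    intersectionForm (mapPair σ p) x y = intersectionForm p (x ∘ σ) (y ∘ σ) := by
  simp only [intersectionForm_apply, mapPair, wordForm_map]

lemma intersectionForm_swap (p : List L × List L) (x y : L → ℚ) :
    intersectionForm p.swap x y = -intersectionForm p x y := by
  simp only [intersectionForm_apply, Prod.fst_swap, Prod.snd_swap, neg_sub]

/-! ### The radical of the intersection form -/

variable [DecidableEq L]

/-- The vector of increments of a function on vertices along the edges of the top word. -/
def increments (p : List L × List L) (h : Option L → ℚ) : L → ℚ :=
  fun a => h (wordCycle p.1 (some a)) - h (some a)

/-- The partial sums of the vector `x` along a word: the value at a letter is the sum over the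
letters before it, and the value at the separator is the total sum. -/
def partialSum (l : List L) (x : L → ℚ) : Option L → ℚ
  | none => wordSum l x
  | some b => wordForm l x (Pi.single b 1)

lemma partialSum_append_cons {u v : List L} {b : L} (h : (u ++ b :: v).Nodup) (x : L → ℚ) :
    partialSum (u ++ b :: v) x (some b) = wordSum u x := by
  have hzero {l : List L} (hb : b ∉ l) : ∀ a ∈ l, (Pi.single b 1 : L → ℚ) a = (0 : L → ℚ) a :=
    fun a ha => Pi.single_eq_of_ne (ne_of_mem_of_not_mem ha hb) 1
  obtain ⟨hu, hv⟩ : b ∉ u ∧ b ∉ v := by grind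
  simp [partialSum, wordForm_congr (fun _ _ => rfl) (hzero hu),
    wordForm_congr (fun _ _ => rfl) (hzero hv), wordSum_congr (hzero hv)]

lemma partialSum_wordCycle_none {l : List L} (h : l.Nodup) (x : L → ℚ) :
    partialSum l x (wordCycle l none) = 0 := by
  rcases l with _ | ⟨a, l⟩
  · rfl
  · rw [wordCycle_cons_apply_none h]
    exact partialSum_append_cons (u := []) h x

lemma partialSum_wordCycle_some {l : List L} (h : l.Nodup) {b : L} (hb : b ∈ l) (x : L → ℚ) :
    partialSum l x (wordCycle l (some b)) = partialSum l x (some b) + x b := by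
  obtain ⟨u, v, rfl⟩ := List.append_of_mem hb
  rw [partialSum_append_cons h]
  rcases v with _ | ⟨c, v⟩
  · rw [wordCycle_concat_apply_last h]
    simp [partialSum]
  · have hassoc : u ++ b :: c :: v = (u ++ [b]) ++ c :: v := by simp
    rw [wordCycle_append_cons_cons_apply h, hassoc, partialSum_append_cons (hassoc ▸ h)]
    simp

lemma exists_increments_of_mem_ker {p : List L × List L} (hl : IsLabeled p) {x : L → ℚ}
    (hx : x ∈ LinearMap.ker (intersectionForm p)) :
    ∃ h : Option L → ℚ, (∀ w, h (vertexPerm p w) = h w) ∧ x = increments p h := by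
  have heq : partialSum p.1 x = partialSum p.2 x := by
    funext w
    rcases w with _ | b
    · exact congrArg (· x) (wordSum_perm hl.perm)
    · exact sub_eq_zero.1 (LinearMap.congr_fun (LinearMap.mem_ker.1 hx) (Pi.single b 1))
  refine ⟨partialSum p.1 x, fun w => ?_, funext fun b => ?_⟩
  · obtain ⟨w, rfl⟩ := (wordCycle p.2).surjective w
    rw [vertexPerm_wordCycle]
    rcases w with _ | b
    · rw [partialSum_wordCycle_none hl.1.1, heq, partialSum_wordCycle_none hl.2.1]
    · rw [partialSum_wordCycle_some hl.1.1 (hl.1.2 b), heq,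
        partialSum_wordCycle_some hl.2.1 (hl.2.2 b)]
  · rw [increments, partialSum_wordCycle_some hl.1.1 (hl.1.2 b), add_sub_cancel_left]

end Form

/-! ### Rauzy moves act by isometries of determinant one -/

section Isometry

variable {L : Type*} [DecidableEq L] {p q : List L × List L}

/-- The coordinate change `x ↦ x - x b • e c` induced by a Rauzy move that cuts the edge `b` out of
the edge `c`. -/
def cutMap (b c : L) : (L → ℚ) →ₗ[ℚ] L → ℚ :=
  LinearMap.transvection (-LinearMap.proj b) (Pi.single c 1)

lemma cutMap_apply_self (b c : L) (x : L → ℚ) : cutMap b c x c = x c - x b := by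
  simp [cutMap, LinearMap.transvection.apply, sub_eq_add_neg]

lemma cutMap_apply_of_ne (b : L) {c d : L} (h : d ≠ c) (x : L → ℚ) : cutMap b c x d = x d := by
  simp [cutMap, LinearMap.transvection.apply, h]

lemma wordSum_cutMap {b c : L} {l : List L} (h : c ∉ l) (x : L → ℚ) :
    wordSum l (cutMap b c x) = wordSum l x :=
  wordSum_congr fun _ ha => cutMap_apply_of_ne b (ne_of_mem_of_not_mem ha h) x

lemma wordForm_cutMap {b c : L} {l : List L} (h : c ∉ l) (x y : L → ℚ) :
    wordForm l (cutMap b c x) (cutMap b c y) = wordForm l x y :=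
  wordForm_congr (fun _ ha => cutMap_apply_of_ne b (ne_of_mem_of_not_mem ha h) x)
    fun _ ha => cutMap_apply_of_ne b (ne_of_mem_of_not_mem ha h) y

lemma det_cutMap [Finite L] {b c : L} (h : b ≠ c) : LinearMap.det (cutMap b c) = 1 := by
  simp [cutMap, LinearMap.transvection.det, h]

lemma intersectionForm_cutMap_right {P R T : List L} {z y : L}
    (hl : IsLabeled (P ++ [z], R ++ z :: (T ++ [y]))) (v w : L → ℚ) :
    intersectionForm (P ++ [z], R ++ z :: y :: T) (cutMap y z v) (cutMap y z w) =
      intersectionForm (P ++ [z], R ++ z :: (T ++ [y])) v w := by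
  obtain ⟨⟨hP, hR⟩, hT, hyz⟩ : ((z ∉ P) ∧ z ∉ R) ∧ z ∉ T ∧ y ≠ z := by
    have htop := hl.1.1
    have hbot := hl.2.1
    grind
  have hsum := congrArg (· v) (wordSum_perm hl.perm)
  simp only [wordSum_append, wordSum_cons, wordSum_nil] at hsum
  simp only [intersectionForm_apply, wordForm_append, wordForm_cons, wordForm_nil, wordSum_append,
    wordSum_cons, wordSum_nil, wordSum_cutMap hP, wordSum_cutMap hR, wordSum_cutMap hT,
    wordForm_cutMap hP, wordForm_cutMap hR, wordForm_cutMap hT, cutMap_apply_self,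
    cutMap_apply_of_ne y hyz]
  linear_combination (-w y) * hsum

lemma intersectionForm_cutMap_left {P R T : List L} {a y : L}
    (hl : IsLabeled (a :: P, y :: (T ++ a :: R))) (v w : L → ℚ) :
    intersectionForm (a :: P, T ++ y :: a :: R) (cutMap y a v) (cutMap y a w) =
      intersectionForm (a :: P, y :: (T ++ a :: R)) v w := by
  obtain ⟨⟨hP, hR⟩, hT, hya⟩ : ((a ∉ P) ∧ a ∉ R) ∧ a ∉ T ∧ y ≠ a := by
    have htop := hl.1.1
    have hbot := hl.2.1
    grind
  have hsum := congrArg (· w) (wordSum_perm hl.perm)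
  simp only [wordSum_append, wordSum_cons] at hsum
  simp only [intersectionForm_apply, wordForm_append, wordForm_cons, wordSum_append,
    wordSum_cons, wordSum_cutMap hP, wordSum_cutMap hR, wordSum_cutMap hT,
    wordForm_cutMap hP, wordForm_cutMap hR, wordForm_cutMap hT, cutMap_apply_self,
    cutMap_apply_of_ne y hya]
  linear_combination (-v y) * hsum

/-- The increments of the vertex angle rescaled by `f`. -/
noncomputable def angleIncrements (p : List L × List L) (f : ℕ → ℚ) : L → ℚ :=
  increments p (f ∘ vertexAngle p)

lemma cutMap_angleIncrements_right {P R T : List L} {z y : L}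
    (hl : IsLabeled (P ++ [z], R ++ z :: (T ++ [y]))) (f : ℕ → ℚ) :
    cutMap y z (angleIncrements (P ++ [z], R ++ z :: (T ++ [y])) f) =
      angleIncrements (P ++ [z], R ++ z :: y :: T) f := by
  have hlast := wordCycle_concat_apply_last hl.1.1
  funext b
  by_cases hb : b = z
  · subst hb
    simp only [cutMap_apply_self, angleIncrements, increments, Function.comp_apply, hlast,
      vertexAngle_right_none hl, vertexAngle_right_some hl, vertexAngle_none_of_right hl]
    ring
  · rw [cutMap_apply_of_ne y hb]
    have hne : wordCycle (P ++ [z]) (some b) ≠ none := fun h =>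
      hb (Option.some_injective _ ((wordCycle _).injective (h.trans hlast.symm)))
    obtain ⟨c, hc⟩ := Option.ne_none_iff_exists'.1 hne
    simp only [angleIncrements, increments, Function.comp_apply, hc, vertexAngle_right_some hl]

lemma cutMap_angleIncrements_left {P R T : List L} {a y : L}
    (hl : IsLabeled (a :: P, y :: (T ++ a :: R))) (f : ℕ → ℚ) :
    cutMap y a (angleIncrements (a :: P, y :: (T ++ a :: R)) f) =
      angleIncrements (a :: P, T ++ y :: a :: R) f := by
  have hne (b : L) : wordCycle (a :: P) (some b) ≠ some a := fun h => by
    rw [← wordCycle_cons_apply_none hl.1.1] at h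
    exact Option.some_ne_none b ((wordCycle _).injective h)
  funext b
  by_cases hb : b = a
  · subst hb
    simp only [cutMap_apply_self, angleIncrements, increments, Function.comp_apply,
      vertexAngle_left_first hl (hne y), vertexAngle_left_of_ne hl (hne _),
      vertexAngle_first_of_left hl]
    ring
  · have hb' : some b ≠ some a := fun h => hb (Option.some_injective _ h)
    simp only [cutMap_apply_of_ne y hb, angleIncrements, increments, Function.comp_apply,
      vertexAngle_left_of_ne hl (hne b), vertexAngle_left_of_ne hl hb']

lemma angleIncrements_swap (hl : IsLabeled p) (f : ℕ → ℚ) :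
    angleIncrements p.swap f = angleIncrements p f := by
  funext b
  simp only [angleIncrements, increments, Function.comp_apply, vertexAngle_swap hl, Prod.fst_swap,
    vertexAngle_wordCycle]

/-- A linear map of determinant one that carries the intersection form of `p` to that of `q`, as
well as the increments of every function of the vertex angle. -/
structure IsAngleIsometry (p q : List L × List L) (B : (L → ℚ) →ₗ[ℚ] L → ℚ) : Prop where
  det_eq_one : LinearMap.det B = 1
  map_form : ∀ x y, intersectionForm q (B x) (B y) = intersectionForm p x y
  map_angleIncrements : ∀ f, B (angleIncrements p f) = angleIncrements q f

lemma RauzyStep.exists_isAngleIsometry [Finite L] (h : RauzyStep p q) (hl : IsLabeled p) :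
    ∃ B, IsAngleIsometry p q B := by
  induction h with
  | right P z R T y =>
    have hbot := hl.2.1
    exact ⟨cutMap y z, det_cutMap (by grind), intersectionForm_cutMap_right hl,
      cutMap_angleIncrements_right hl⟩
  | left a P y T R =>
    have hbot := hl.2.1
    exact ⟨cutMap y a, det_cutMap (by grind), intersectionForm_cutMap_left hl,
      cutMap_angleIncrements_left hl⟩
  | @swap p q h ih =>
    obtain ⟨B, hdet, hform, hincr⟩ := ih hl.swap
    refine ⟨B, hdet, fun x y => ?_, fun f => ?_⟩
    · rw [intersectionForm_swap, intersectionForm_swap, hform]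
    · have hlp : IsLabeled p := hl.swap
      rw [angleIncrements_swap hlp, hincr, angleIncrements_swap (hlp.of_reach (.single h))]

lemma Reach.exists_isAngleIsometry [Finite L] (h : Reach p q) (hl : IsLabeled p) :
    ∃ B, IsAngleIsometry p q B := by
  induction h with
  | refl => exact ⟨LinearMap.id, LinearMap.det_id, fun _ _ => rfl, fun _ => rfl⟩
  | tail hreach hstep ih =>
    obtain ⟨B, hdet, hform, hincr⟩ := ih
    obtain ⟨C, hdet', hform', hincr'⟩ := hstep.exists_isAngleIsometry (hl.of_reach hreach)
    refine ⟨C ∘ₗ B, ?_, fun x y => ?_, fun f => ?_⟩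
    · rw [LinearMap.det_comp, hdet, hdet', one_mul]
    · rw [LinearMap.comp_apply, LinearMap.comp_apply, hform', hform]
    · rw [LinearMap.comp_apply, hincr, hincr']

lemma angleIncrements_mapPair (σ : Perm L) (p : List L × List L) (f : ℕ → ℚ) :
    angleIncrements (mapPair σ p) f ∘ σ = angleIncrements p f := by
  funext a
  have hangle := vertexAngle_mapPair σ p
  have ha : some (σ a) = optionCongr σ (some a) := rfl
  have hcycle : wordCycle (mapPair σ p).1 (optionCongr σ (some a)) =
      optionCongr σ (wordCycle p.1 (some a)) := by
    rw [mapPair, wordCycle_map, Perm.mul_apply, Perm.mul_apply, Perm.inv_def, symm_apply_apply]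
  simp only [Function.comp_apply, angleIncrements, increments, ha, hcycle, hangle]

lemma det_funLeft_perm [Fintype L] (σ : Perm L) :
    LinearMap.det (LinearMap.funLeft ℚ ℚ σ) = (Perm.sign σ : ℤ) := by
  rw [← Matrix.det_permutation (R := ℚ), ← LinearMap.det_toLin']
  congr 1
  refine LinearMap.ext fun x => ?_
  rw [Matrix.toLin'_apply, Matrix.permMatrix_mulVec]
  rfl

/-- Any two vertices with the same angle coincide. -/
def HasDistinctAngles (p : List L × List L) : Prop :=
  ∀ x y, vertexAngle p x = vertexAngle p y → (vertexPerm p).SameCycle x y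

lemma HasDistinctAngles.exists_angleIncrements_of_mem_ker (hp : HasDistinctAngles p)
    (hl : IsLabeled p) {x : L → ℚ} (hx : x ∈ LinearMap.ker (intersectionForm p)) :
    ∃ f, x = angleIncrements p f := by
  obtain ⟨h, hinv, rfl⟩ := exists_increments_of_mem_ker hl hx
  have hfactor : h.FactorsThrough (vertexAngle p) := fun x y hxy =>
    Perm.sameCycle_one.1 (sameCycle_map_of_forall (r := h) (fun w => by rw [hinv]) (hp x y hxy))
  refine ⟨Function.extend (vertexAngle p) h 0, ?_⟩
  rw [angleIncrements]
  exact congrArg _ (funext fun x => (hfactor.extend_apply 0 x).symm)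

-- The isometry realizing a renaming, followed by the inverse renaming, fixes the radical pointwise:
-- it preserves the increments of every function of the angle.
theorem sign_eq_one_of_mem_renamingGroup [Fintype L] (hl : IsLabeled p)
    (hp : HasDistinctAngles p) {σ : Perm L} (hσ : σ ∈ renamingGroup p) : Perm.sign σ = 1 := by
  obtain ⟨B, hB⟩ := Reach.exists_isAngleIsometry hσ hl
  have horth : (intersectionForm p).IsOrthogonal (LinearMap.funLeft ℚ ℚ σ ∘ₗ B) := fun x y => by
    rw [← hB.map_form x y, intersectionForm_mapPair]
    rfl
  have hfix : ∀ x ∈ LinearMap.ker (intersectionForm p), (LinearMap.funLeft ℚ ℚ σ ∘ₗ B) x = x := by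
    intro x hx
    obtain ⟨f, rfl⟩ := hp.exists_angleIncrements_of_mem_ker hl hx
    rw [LinearMap.comp_apply, hB.map_angleIncrements]
    exact angleIncrements_mapPair σ p f
  have hdet := det_eq_one_of_isOrthogonal_of_forall_mem_ker (isAlt_intersectionForm hl.perm)
    horth hfix
  rw [LinearMap.det_comp, hB.det_eq_one, mul_one, det_funLeft_perm] at hdet
  exact Units.ext (Int.cast_injective (α := ℚ) (by simpa using hdet))

end Isometry

/-! ### The corner permutation -/

section OptionCongr

variable {α : Type*}

lemma optionCongr_mul (σ τ : Perm α) :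
    optionCongr (σ * τ) = (optionCongr σ * optionCongr τ : Perm (Option α)) :=
  optionCongr_trans τ σ

lemma optionCongr_inv (σ : Perm α) : optionCongr σ⁻¹ = (optionCongr σ : Perm (Option α))⁻¹ :=
  optionCongr_symm σ

lemma sameCycle_optionCongr_iff {σ : Perm α} {a b : α} :
    Perm.SameCycle (optionCongr σ) (some a) (some b) ↔ σ.SameCycle a b := by
  constructor
  · intro h
    refine sameCycle_map_of_forall (r := fun x : Option α => x.getD a) (fun x => ?_) h
    rcases x with _ | x
    · exact .rfl
    · exact (Perm.SameCycle.refl σ x).apply_right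
  · exact sameCycle_map_of_forall fun x =>
      (Perm.SameCycle.refl (optionCongr σ : Perm (Option α)) (some x)).apply_right

variable [DecidableEq α]

lemma formPerm_map_some (l : List α) : (l.map some).formPerm = optionCongr l.formPerm := by
  induction l with
  | nil => exact optionCongr_one.symm
  | cons x l ih =>
    rcases l with _ | ⟨y, l⟩
    · exact optionCongr_one.symm
    · rw [List.map_cons, List.map_cons, List.formPerm_cons_cons, ← List.map_cons, ih,
        List.formPerm_cons_cons, optionCongr_mul, optionCongr_swap]

end OptionCongr

section MinimalPeriod

open Function

variable {α : Type*} [Finite α] {σ τ : Perm α} {x y : α}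

lemma minimalPeriod_perm_pos (σ : Perm α) (x : α) : 0 < minimalPeriod σ x :=
  minimalPeriod_pos_of_mem_periodicPts (σ.injective.mem_periodicPts x)

lemma ncard_sameCycle (σ : Perm α) (x : α) :
    {y | σ.SameCycle x y}.ncard = minimalPeriod σ x := by
  have himage : {y | σ.SameCycle x y} = (fun i => σ^[i] x) '' Set.Iio (minimalPeriod σ x) := by
    ext y
    constructor
    · intro h
      obtain ⟨i, rfl⟩ := h.exists_nat_pow_eq
      refine ⟨i % minimalPeriod σ x, Nat.mod_lt _ (minimalPeriod_perm_pos σ x), ?_⟩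
      simp only [← Perm.iterate_eq_pow]
      exact iterate_mod_minimalPeriod_eq
    · rintro ⟨i, -, rfl⟩
      exact ⟨i, by simp only [zpow_natCast, Perm.iterate_eq_pow]⟩
  rw [himage, Set.InjOn.ncard_image, Set.ncard_eq_toFinset_card', Set.toFinset_Iio,
    Nat.card_Iio]
  exact fun i hi j hj => (iterate_eq_iterate_iff_of_lt_minimalPeriod hi hj).1

lemma minimalPeriod_eq_of_sameCycle (h : σ.SameCycle x y) :
    minimalPeriod σ x = minimalPeriod σ y := by
  have (z : α) : σ.SameCycle x z ↔ σ.SameCycle y z := ⟨h.symm.trans, h.trans⟩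
  simp only [← ncard_sameCycle, this]

end MinimalPeriod

section Corner

variable {L : Type*} [DecidableEq L] {p : List L × List L} {a b : L}

/-- The permutation of the letters obtained from the vertex permutation by removing the separator
and the first letter of the top word; the latter becomes a fixed point. -/
def cornerPerm (p : List L × List L) : Perm L :=
  removeNone (removePoint (wordCycle p.1 none) (removePoint none (vertexPerm p)))

lemma IsLabeled.wordCycle_none_ne_none [Nonempty L] (hl : IsLabeled p) :
    wordCycle p.1 none ≠ none := by
  obtain ⟨a, l, hp⟩ := List.exists_cons_of_ne_nil
    (List.ne_nil_of_mem (hl.1.2 (Classical.arbitrary L)))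
  rw [hp, wordCycle_cons_apply_none (hp ▸ hl.1.1)]
  exact Option.some_ne_none a

lemma optionCongr_cornerPerm [Nonempty L] (hl : IsLabeled p) :
    optionCongr (cornerPerm p) =
      removePoint (wordCycle p.1 none) (removePoint none (vertexPerm p)) := by
  have hnone := removePoint_apply_self none (vertexPerm p)
  have hfix : removePoint (wordCycle p.1 none) (removePoint none (vertexPerm p)) none = none := by
    rw [removePoint_apply_of_ne hl.wordCycle_none_ne_none.symm, hnone]
    rw [hnone]
    exact hl.wordCycle_none_ne_none.symm
  rw [cornerPerm, map_equiv_removeNone, hfix, swap_self]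
  rfl

lemma cornerPerm_apply_first [Nonempty L] (hl : IsLabeled p) (ha : some a = wordCycle p.1 none) :
    cornerPerm p a = a := by
  refine Option.some_injective L ?_
  change optionCongr (cornerPerm p) (some a) = some a
  rw [optionCongr_cornerPerm hl, ha, removePoint_apply_self]

lemma sameCycle_cornerPerm_iff [Nonempty L] (hl : IsLabeled p)
    (ha : some a ≠ wordCycle p.1 none) (hb : some b ≠ wordCycle p.1 none) :
    (cornerPerm p).SameCycle a b ↔ (vertexPerm p).SameCycle (some a) (some b) := by
  rw [← sameCycle_optionCongr_iff, optionCongr_cornerPerm hl, sameCycle_removePoint_iff ha hb,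
    sameCycle_removePoint_iff (Option.some_ne_none a) (Option.some_ne_none b)]

lemma vertexAngle_some [Finite L] (hl : IsLabeled p) (ha : some a ≠ wordCycle p.1 none) :
    vertexAngle p (some a) = Function.minimalPeriod (cornerPerm p) a := by
  have : Nonempty L := ⟨a⟩
  rw [vertexAngle, ← ncard_sameCycle]
  congr 1
  ext b
  refine ⟨fun h => (sameCycle_cornerPerm_iff hl ha h.1).2 h.2, fun h => ?_⟩
  have hb : some b ≠ wordCycle p.1 none := fun hb =>
    ha (h.eq_of_right (cornerPerm_apply_first hl hb) ▸ hb)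
  exact ⟨hb, (sameCycle_cornerPerm_iff hl ha hb).1 h⟩

lemma removePoint_none_wordCycle {l : List L} :
    removePoint none (wordCycle l) = optionCongr l.formPerm := by
  rw [← formPerm_map_some]
  rcases l with _ | ⟨b, l⟩
  · simp only [wordCycle, removePoint, List.map_nil, List.formPerm_singleton, List.formPerm_nil,
      Perm.one_apply, swap_self, mul_one]
    rfl
  · rw [wordCycle, List.map_cons, List.formPerm_cons_cons, removePoint_swap_mul]
    exact List.formPerm_apply_of_notMem (by simp)

lemma wordCycle_eq_swap_mul (l : List L) :
    wordCycle l = swap none (wordCycle l none) * optionCongr l.formPerm := by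
  rw [← removePoint_none_wordCycle, removePoint, swap_mul_self_mul]

lemma vertexPerm_standard {a : L} {U V : List L} (hl : IsLabeled (a :: U, V ++ [a])) :
    ∃ x y, y ≠ none ∧ vertexPerm (a :: U, V ++ [a]) =
      swap none x * (optionCongr (U.formPerm * V.formPerm⁻¹) * swap (some a) y) := by
  have haV : a ∉ V := notMem_of_nodup_append_singleton hl.2.1
  have hcomm : swap none (some a) * (optionCongr V.formPerm : Perm (Option L))⁻¹ =
      (optionCongr V.formPerm : Perm (Option L))⁻¹ * swap none (some a) := by
    have hfix : (optionCongr V.formPerm : Perm (Option L))⁻¹ (some a) = some a := by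
      rw [Perm.inv_eq_iff_eq, optionCongr_apply, Option.map_some,
        List.formPerm_apply_of_notMem haV]
    rw [mul_swap_eq_swap_mul, hfix]
    rfl
  have hconj : swap none (some a) * swap none (wordCycle V none) * swap none (some a) =
      swap (some a) (swap none (some a) (wordCycle V none)) := by
    rw [mul_swap_eq_swap_mul (swap none (some a)), mul_assoc, swap_mul_self, mul_one,
      swap_apply_left]
  refine ⟨wordCycle U none, swap none (some a) (wordCycle V none), ?_, ?_⟩
  · rw [Ne, swap_apply_eq_iff, swap_apply_left, ← wordCycle_apply_of_notMem haV]
    exact fun h => Option.some_ne_none a ((wordCycle V).injective h).symm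
  · rw [vertexPerm, wordCycle_cons hl.1.1, wordCycle_concat hl.2.1, mul_inv_rev, swap_inv,
      swap_comm (some a) none, ← hconj]
    nth_rw 1 [wordCycle_eq_swap_mul U, wordCycle_eq_swap_mul V]
    rw [mul_inv_rev, swap_inv, optionCongr_mul, optionCongr_inv]
    simp only [mul_assoc]
    rw [← mul_assoc (swap none (some a)), hcomm, mul_assoc]

lemma cornerPerm_standard {a : L} {U V : List L} (hl : IsLabeled (a :: U, V ++ [a])) :
    cornerPerm (a :: U, V ++ [a]) = U.formPerm * V.formPerm⁻¹ := by
  have : Nonempty L := ⟨a⟩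
  obtain ⟨x, y, hy, hvertex⟩ := vertexPerm_standard hl
  have hVa : V.formPerm⁻¹ a = a := Perm.inv_eq_iff_eq.2
    (List.formPerm_apply_of_notMem (notMem_of_nodup_append_singleton hl.2.1)).symm
  have hfix : optionCongr (U.formPerm * V.formPerm⁻¹) (some a) = some a := by
    rw [optionCongr_apply, Option.map_some, Perm.mul_apply, hVa,
      List.formPerm_apply_of_notMem (List.nodup_cons.1 hl.1.1).1]
  refine optionCongr_injective ?_
  rw [optionCongr_cornerPerm hl, hvertex, wordCycle_cons_apply_none hl.1.1, removePoint_swap_mul,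
    removePoint_mul_swap, removePoint_swap_mul hfix]
  rw [Perm.mul_apply, swap_apply_of_ne_of_ne (Option.some_ne_none a).symm hy.symm]
  rfl

lemma IsIrreducible.wordCycle_none_ne [Nontrivial L] (hi : IsIrreducible p) (hl : IsLabeled p) :
    wordCycle p.1 none ≠ wordCycle p.2 none := by
  obtain ⟨_ | ⟨a, l⟩, _ | ⟨b, m⟩⟩ := p
  · exact absurd (hl.1.2 (Classical.arbitrary L)) List.not_mem_nil
  · exact absurd (hl.1.2 (Classical.arbitrary L)) List.not_mem_nil
  · exact absurd (hl.2.2 (Classical.arbitrary L)) List.not_mem_nil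
  rw [wordCycle_cons_apply_none hl.1.1, wordCycle_cons_apply_none hl.2.1]
  intro hab
  obtain rfl := Option.some_injective L hab
  obtain h | rfl := hi [a] l [a] m rfl .rfl
  · exact List.cons_ne_nil a [] h
  · obtain ⟨c, hc⟩ := exists_ne a
    exact hc (List.mem_singleton.1 (hl.1.2 c))

lemma IsIrreducible.wordCycle_ne_none [Nontrivial L] (hi : IsIrreducible p) (hl : IsLabeled p)
    {x : Option L} (hx : wordCycle p.2 x = none) : wordCycle p.1 x ≠ none := by
  obtain ⟨l, m⟩ := p
  obtain rfl | ⟨l, y, rfl⟩ := List.eq_nil_or_concat' l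
  · exact absurd (hl.1.2 (Classical.arbitrary L)) List.not_mem_nil
  obtain rfl | ⟨m, z, rfl⟩ := List.eq_nil_or_concat' m
  · exact absurd (hl.2.2 (Classical.arbitrary L)) List.not_mem_nil
  intro hx'
  rw [← wordCycle_concat_apply_last hl.2.1, EmbeddingLike.apply_eq_iff_eq] at hx
  rw [← wordCycle_concat_apply_last hl.1.1, EmbeddingLike.apply_eq_iff_eq, hx] at hx'
  obtain rfl := Option.some_injective L hx'
  have hperm : l.Perm m := (List.perm_append_right_iff [z]).1
    ((List.perm_ext_iff_of_nodup hl.1.1 hl.2.1).2 fun c => iff_of_true (hl.1.2 c) (hl.2.2 c))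
  obtain rfl | h := hi l [z] m [z] rfl hperm
  · obtain ⟨c, hc⟩ := exists_ne z
    exact hc (List.mem_singleton.1 (hl.1.2 c))
  · exact List.cons_ne_nil z [] h

lemma IsIrreducible.exists_sameCycle_ne_first [Nontrivial L] (hi : IsIrreducible p)
    (hl : IsLabeled p) (x : Option L) :
    ∃ b, some b ≠ wordCycle p.1 none ∧ (vertexPerm p).SameCycle x (some b) := by
  suffices ∃ y, y ≠ none ∧ y ≠ wordCycle p.1 none ∧ (vertexPerm p).SameCycle x y by
    obtain ⟨y, hy, hb, hxy⟩ := this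
    obtain ⟨b, rfl⟩ := Option.ne_none_iff_exists'.1 hy
    exact ⟨b, hb, hxy⟩
  have hcycle (z : Option L) :
      (vertexPerm p).SameCycle (wordCycle p.2 z) (wordCycle p.1 z) := by
    rw [← vertexPerm_wordCycle, Perm.sameCycle_apply_right]
  have hbot : wordCycle p.2 none ≠ none := hl.swap.wordCycle_none_ne_none
  by_cases hx : x = none
  · subst hx
    obtain ⟨z, hz⟩ := (wordCycle p.2).surjective none
    refine ⟨wordCycle p.1 z, hi.wordCycle_ne_none hl hz, fun h => hbot ?_, hz ▸ hcycle z⟩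
    rwa [(wordCycle p.1).injective h] at hz
  by_cases hx' : x = wordCycle p.1 none
  · exact ⟨wordCycle p.2 none, hbot, (hi.wordCycle_none_ne hl).symm, hx' ▸ (hcycle none).symm⟩
  · exact ⟨x, hx, hx', .rfl⟩

lemma IsIrreducible.hasDistinctAngles_iff [Finite L] [Nontrivial L] (hi : IsIrreducible p)
    (hl : IsLabeled p) :
    HasDistinctAngles p ↔ ∀ a b, some a ≠ wordCycle p.1 none → some b ≠ wordCycle p.1 none →
      Function.minimalPeriod (cornerPerm p) a = Function.minimalPeriod (cornerPerm p) b →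
      (cornerPerm p).SameCycle a b := by
  constructor
  · intro h a b ha hb hab
    rw [sameCycle_cornerPerm_iff hl ha hb]
    exact h _ _ (by rw [vertexAngle_some hl ha, vertexAngle_some hl hb, hab])
  · intro h x y hxy
    obtain ⟨a, ha, hxa⟩ := hi.exists_sameCycle_ne_first hl x
    obtain ⟨b, hb, hyb⟩ := hi.exists_sameCycle_ne_first hl y
    rw [vertexAngle_eq_of_sameCycle hxa, vertexAngle_eq_of_sameCycle hyb, vertexAngle_some hl ha,
      vertexAngle_some hl hb] at hxy
    exact (hxa.trans ((sameCycle_cornerPerm_iff hl ha hb).1 (h a b ha hb hxy))).trans hyb.symm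

end Corner

section Invariance

variable {L : Type*} [DecidableEq L] {p q : List L × List L}

lemma HasDistinctAngles.of_forall_ne (hq : HasDistinctAngles q) {c r : Option L} (hrc : r ≠ c)
    (hcr : (vertexPerm p).SameCycle c r) (hangle : ∀ x ≠ c, vertexAngle q x = vertexAngle p x)
    (hcycle : ∀ x ≠ c, ∀ y ≠ c,
      (vertexPerm q).SameCycle x y → (vertexPerm p).SameCycle x y) :
    HasDistinctAngles p := by
  intro x y hxy
  have hrep (x : Option L) : ∃ x' ≠ c, (vertexPerm p).SameCycle x x' := by
    obtain rfl | hx := eq_or_ne x c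
    exacts [⟨r, hrc, hcr⟩, ⟨x, hx, .rfl⟩]
  obtain ⟨x', hx', hxx'⟩ := hrep x
  obtain ⟨y', hy', hyy'⟩ := hrep y
  rw [vertexAngle_eq_of_sameCycle hxx', vertexAngle_eq_of_sameCycle hyy', ← hangle x' hx',
    ← hangle y' hy'] at hxy
  exact (hxx'.trans (hcycle x' hx' y' hy' (hq x' y' hxy))).trans hyy'.symm

lemma HasDistinctAngles.swap (h : HasDistinctAngles p) (hl : IsLabeled p) :
    HasDistinctAngles p.swap := by
  intro x y hxy
  rw [vertexAngle_swap hl, vertexAngle_swap hl] at hxy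
  rw [vertexPerm_swap, Perm.sameCycle_inv]
  exact h x y hxy

lemma HasDistinctAngles.of_step (h : RauzyStep p q) (hl : IsLabeled p)
    (hq : HasDistinctAngles q) : HasDistinctAngles p := by
  induction h with
  | right P z R T y =>
    obtain ⟨δ, hδ, hκp, hκq⟩ := exists_vertexPerm_right hl
    have hyz : y ≠ z := by
      have := hl.2.1
      grind
    refine hq.of_forall_ne (c := none) (r := δ (some y)) ?_ ?_ ?_ ?_
    · rw [hδ, ← wordCycle_concat_apply_last hl.1.1]
      exact (wordCycle _).injective.ne (Option.some_injective L |>.ne hyz)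
    · rw [← Perm.sameCycle_apply_left, hκp, Perm.mul_apply, swap_apply_left]
    · intro x hx
      obtain ⟨b, rfl⟩ := Option.ne_none_iff_exists'.1 hx
      exact vertexAngle_right_some hl b
    · intro x hx x' hx'
      rw [hκp, hκq, sameCycle_mul_swap_iff δ (some y) hx hx']
      exact id
  | left a P y T R =>
    obtain ⟨δ, -, hκp, hκq⟩ := exists_vertexPerm_left hl
    have hya : y ≠ a := by
      have := hl.2.1
      grind
    refine hq.of_forall_ne (c := some a) (r := some y) (Option.some_injective L |>.ne hya) ?_
      (fun x hx => vertexAngle_left_of_ne hl hx) ?_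
    · rw [← Perm.sameCycle_apply_right, hκp, Perm.mul_apply, swap_apply_right]
    · intro x hx x' hx'
      rw [hκp, hκq, sameCycle_mul_swap_iff δ (some y) hx hx']
      exact id
  | swap h ih =>
    have hl' := hl.swap
    exact (ih hl' (hq.swap (hl'.of_reach (.single h)).swap)).swap hl'

lemma HasDistinctAngles.of_reach (h : Reach p q) (hl : IsLabeled p) (hq : HasDistinctAngles q) :
    HasDistinctAngles p := by
  induction h with
  | refl => exact hq
  | tail hpr hstep ih => exact ih (hq.of_step hstep (hl.of_reach hpr))

end Invariance

/-! ### Splitting a cycle of a permutation -/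

section SplitCycle

open Function

variable {α : Type*} {σ τ : Perm α} {x : α} {n : ℕ}

lemma pow_apply_eq_of_forall_lt (h : ∀ i < n, τ ((σ ^ i) x) = σ ((σ ^ i) x)) :
    (τ ^ n) x = (σ ^ n) x := by
  induction n with
  | zero => rfl
  | succ n ih =>
    rw [pow_succ', pow_succ', Perm.mul_apply, Perm.mul_apply, ih fun i hi => h i (by omega),
      h n n.lt_succ_self]

lemma pow_apply_ne_of_fixed {e : α} (he : σ e = e) (hx : x ≠ e) (n : ℕ) : (σ ^ n) x ≠ e := by
  rw [← Perm.pow_apply_eq_self_of_apply_eq_self he n]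
  exact (σ ^ n).injective.ne hx

lemma pow_minimalPeriod_apply (σ : Perm α) (x : α) : (σ ^ minimalPeriod σ x) x = x := by
  rw [← Perm.iterate_eq_pow]
  exact iterate_minimalPeriod

lemma pow_apply_ne_pow_apply {i j : ℕ} (hij : i < j) (hj : j < minimalPeriod σ x) :
    (σ ^ i) x ≠ (σ ^ j) x := by
  rw [← Perm.iterate_eq_pow, ← Perm.iterate_eq_pow]
  exact fun h => hij.ne ((iterate_eq_iterate_iff_of_lt_minimalPeriod (hij.trans hj) hj).1 h)

lemma pow_apply_ne_self (hn : 0 < n) (h : n < minimalPeriod σ x) : (σ ^ n) x ≠ x :=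
  (pow_apply_ne_pow_apply hn h).symm

lemma minimalPeriod_eq_of_pow_apply (hn : 0 < n) (h : (σ ^ n) x = x)
    (hlt : ∀ i, 0 < i → i < n → (σ ^ i) x ≠ x) : minimalPeriod σ x = n := by
  have hper : IsPeriodicPt σ n x := by
    rw [IsPeriodicPt, IsFixedPt, Perm.iterate_eq_pow, h]
  refine (hper.minimalPeriod_le hn).eq_of_not_lt fun hm => ?_
  exact hlt _ (hper.minimalPeriod_pos hn) hm (pow_minimalPeriod_apply σ x)

lemma minimalPeriod_eq_of_forall_pow_apply {β : Type*} {τ : Perm β} {y : β}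
    (h : ∀ n : ℕ, (σ ^ n) x = x ↔ (τ ^ n) y = y) : minimalPeriod σ x = minimalPeriod τ y :=
  minimalPeriod_eq_minimalPeriod_iff.2 fun n => by
    simpa only [IsPeriodicPt, IsFixedPt, Perm.iterate_eq_pow] using h n

lemma minimalPeriod_conj (σ g : Perm α) (x : α) :
    minimalPeriod (g * σ * g⁻¹) (g x) = minimalPeriod σ x := by
  refine minimalPeriod_eq_of_forall_pow_apply fun n => ?_
  rw [conj_pow, Perm.mul_apply, Perm.mul_apply, Perm.inv_def, symm_apply_apply,
    EmbeddingLike.apply_eq_iff_eq]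

variable [DecidableEq α]

/-- For `σ` fixing `e`, and `x`, `y` on a common cycle of `σ`: the permutation in which the arc of
this cycle from `x` to `y` is closed up to a cycle of its own and `e` is inserted into the
remaining arc. Applying the operation again restores `σ`. -/
def splitCycle (e x y : α) (σ : Perm α) : Perm α := swap e x * σ * swap e y

variable {e y b : α} {k : ℕ}

lemma splitCycle_splitCycle (e x y : α) (σ : Perm α) :
    splitCycle e x y (splitCycle e x y σ) = σ := by
  rw [splitCycle, splitCycle, mul_assoc, mul_assoc, swap_mul_self, mul_one, swap_mul_self_mul]

lemma splitCycle_apply_of_ne {w : α} (hwe : w ≠ e) (hwy : w ≠ y) (hσe : σ w ≠ e)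
    (hσx : σ w ≠ x) : splitCycle e x y σ w = σ w := by
  rw [splitCycle, Perm.mul_apply, Perm.mul_apply, swap_apply_of_ne_of_ne hwe hwy,
    swap_apply_of_ne_of_ne hσe hσx]

lemma splitCycle_apply_self (hy : σ y = x) : splitCycle e x y σ e = e := by
  rw [splitCycle, Perm.mul_apply, Perm.mul_apply, swap_apply_left, hy, swap_apply_right]

lemma pow_splitCycle_apply_of_not_sameCycle (he : ¬ σ.SameCycle b e) (hx : ¬ σ.SameCycle b x)
    (hy : ¬ σ.SameCycle b y) (n : ℕ) : (splitCycle e x y σ ^ n) b = (σ ^ n) b := by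
  have hne {c : α} (hc : ¬ σ.SameCycle b c) (i : ℕ) : (σ ^ i) b ≠ c := fun h =>
    hc (h ▸ (Perm.SameCycle.refl σ b).pow_right)
  refine pow_apply_eq_of_forall_lt fun i _ =>
    splitCycle_apply_of_ne (hne he i) (hne hy i) ?_ ?_
  all_goals rw [← Perm.mul_apply, ← pow_succ']
  exacts [hne he _, hne hx _]

lemma minimalPeriod_splitCycle (he : σ e = e) (hx : x ≠ e) (hk : k < minimalPeriod σ x) :
    minimalPeriod (splitCycle e x ((σ ^ k) x) σ) x = k + 1 := by
  have hwalk {n : ℕ} (hn : n ≤ k) : (splitCycle e x ((σ ^ k) x) σ ^ n) x = (σ ^ n) x := by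
    refine pow_apply_eq_of_forall_lt fun i hi =>
      splitCycle_apply_of_ne (pow_apply_ne_of_fixed he hx i)
        (pow_apply_ne_pow_apply (by omega) hk) ?_ ?_
    all_goals rw [← Perm.mul_apply, ← pow_succ']
    exacts [pow_apply_ne_of_fixed he hx _, pow_apply_ne_self i.succ_pos (by omega)]
  refine minimalPeriod_eq_of_pow_apply k.succ_pos ?_ fun i hi hik => ?_
  · rw [pow_succ', Perm.mul_apply, hwalk le_rfl, splitCycle, Perm.mul_apply, Perm.mul_apply,
      swap_apply_right, he, swap_apply_left]
  · rw [hwalk (by omega)]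
    exact pow_apply_ne_self hi (by omega)

-- Conjugating by `swap e x` turns the cycle through `e` into the arc starting at `σ ^ (k + 1) x`.
lemma minimalPeriod_splitCycle_inserted [Finite α] (he : σ e = e) (hx : x ≠ e)
    (hk : k < minimalPeriod σ x) :
    minimalPeriod (splitCycle e x ((σ ^ k) x) σ) e = minimalPeriod σ x - k := by
  set x' := (σ ^ (k + 1)) x with hx'
  have hperiod : minimalPeriod σ x' = minimalPeriod σ x :=
    (minimalPeriod_eq_of_sameCycle (Perm.SameCycle.refl σ x).pow_right).symm
  have hback : (σ ^ (minimalPeriod σ x - k - 1)) x' = x := by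
    rw [hx', ← Perm.mul_apply, ← pow_add, show minimalPeriod σ x - k - 1 + (k + 1) =
      minimalPeriod σ x by omega, pow_minimalPeriod_apply]
  have hconj : splitCycle e x ((σ ^ k) x) σ =
      swap e x * splitCycle e x' x σ * (swap e x)⁻¹ := by
    rw [splitCycle, splitCycle, mul_assoc, mul_assoc, mul_assoc, swap_inv, swap_mul_self, mul_one,
      mul_swap_eq_swap_mul, he, hx', pow_succ', Perm.mul_apply]
  have hstart : splitCycle e x' x σ x = x' := by
    rw [splitCycle, Perm.mul_apply, Perm.mul_apply, swap_apply_right, he, swap_apply_left]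
  have hlen := minimalPeriod_splitCycle (k := minimalPeriod σ x - k - 1) he
    (pow_apply_ne_of_fixed he hx (k + 1)) (by rw [hperiod]; omega)
  rw [← hx', hback] at hlen
  have hsame : (splitCycle e x' x σ).SameCycle x x' := by
    simpa only [hstart] using (Perm.SameCycle.refl (splitCycle e x' x σ) x).apply_right
  have happ := minimalPeriod_conj (splitCycle e x' x σ) (swap e x) x
  rw [swap_apply_right, ← hconj] at happ
  rw [happ, minimalPeriod_eq_of_sameCycle hsame, hlen]
  omega

section Merge

variable (hy : σ y = x) (hxe : ¬ σ.SameCycle x e)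
include hy hxe

lemma pow_splitCycle_apply_of_lt (hn : n < minimalPeriod σ x) :
    (splitCycle e x y σ ^ n) x = (σ ^ n) x := by
  have hne (i : ℕ) : (σ ^ i) x ≠ e := fun h => hxe (h ▸ (Perm.SameCycle.refl σ x).pow_right)
  have hsucc {i : ℕ} (hi : i < n) : σ ((σ ^ i) x) ≠ x := by
    rw [← Perm.mul_apply, ← pow_succ']
    exact pow_apply_ne_self i.succ_pos (by omega)
  refine pow_apply_eq_of_forall_lt fun i hi =>
    splitCycle_apply_of_ne (hne i) (fun h => hsucc hi (h ▸ hy)) ?_ (hsucc hi)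
  rw [← Perm.mul_apply, ← pow_succ']
  exact hne _

variable [Finite α]

lemma pow_splitCycle_pred_minimalPeriod :
    (splitCycle e x y σ ^ (minimalPeriod σ x - 1)) x = y := by
  have hpos := minimalPeriod_perm_pos σ x
  rw [pow_splitCycle_apply_of_lt hy hxe (by omega)]
  refine σ.injective ?_
  rw [hy, ← Perm.mul_apply, ← pow_succ', Nat.sub_add_cancel hpos, pow_minimalPeriod_apply]

lemma minimalPeriod_le_minimalPeriod_splitCycle :
    minimalPeriod σ x ≤ minimalPeriod (splitCycle e x y σ) x := by
  refine le_of_not_gt fun h => pow_apply_ne_self (minimalPeriod_perm_pos _ x) h ?_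
  rw [← pow_splitCycle_apply_of_lt hy hxe h, pow_minimalPeriod_apply]

lemma minimalPeriod_splitCycle_merged :
    minimalPeriod (splitCycle e x y σ) x + 1 = minimalPeriod σ e + minimalPeriod σ x := by
  have hpos := minimalPeriod_perm_pos σ x
  have hle := minimalPeriod_le_minimalPeriod_splitCycle hy hxe
  have hne : x ≠ e := fun h => hxe (h ▸ .rfl)
  have := minimalPeriod_splitCycle_inserted (k := minimalPeriod σ x - 1)
    (splitCycle_apply_self hy) hne (by omega)
  rw [pow_splitCycle_pred_minimalPeriod hy hxe, splitCycle_splitCycle] at this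
  omega

lemma inv_pow_splitCycle_minimalPeriod :
    ((splitCycle e x y σ)⁻¹ ^ minimalPeriod σ x) x =
      (splitCycle e x y σ ^ (minimalPeriod σ e - 1)) x := by
  have hpos := minimalPeriod_perm_pos σ e
  have hmerged := minimalPeriod_splitCycle_merged hy hxe
  rw [inv_pow, Perm.inv_eq_iff_eq, ← Perm.mul_apply, ← pow_add,
    show minimalPeriod σ x + (minimalPeriod σ e - 1) = minimalPeriod (splitCycle e x y σ) x by
      omega, pow_minimalPeriod_apply]

lemma inv_pow_splitCycle_of_minimalPeriod_eq (h : minimalPeriod σ e = minimalPeriod σ x) :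
    ((splitCycle e x y σ)⁻¹ ^ minimalPeriod σ x) x = y := by
  rw [inv_pow_splitCycle_minimalPeriod hy hxe, h, pow_splitCycle_pred_minimalPeriod hy hxe]

lemma minimalPeriod_splitCycle_inv_pow :
    minimalPeriod (splitCycle e x (((splitCycle e x y σ)⁻¹ ^ minimalPeriod σ x) x)
      (splitCycle e x y σ)) x = minimalPeriod σ e := by
  have hpos := minimalPeriod_perm_pos σ e
  have hmerged := minimalPeriod_splitCycle_merged hy hxe
  have hpos' := minimalPeriod_perm_pos σ x
  have hne : x ≠ e := fun h => hxe (h ▸ .rfl)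
  rw [inv_pow_splitCycle_minimalPeriod hy hxe,
    minimalPeriod_splitCycle (splitCycle_apply_self hy) hne (by omega), Nat.sub_add_cancel hpos]

end Merge

lemma pow_splitCycle_inv_pow_apply [Finite α] (hy : σ y = x) (hbe : ¬ σ.SameCycle b e)
    (hbx : ¬ σ.SameCycle b x) (m n : ℕ) :
    (splitCycle e x (((splitCycle e x y σ)⁻¹ ^ m) x) (splitCycle e x y σ) ^ n) b =
      (σ ^ n) b := by
  have hby : ¬ σ.SameCycle b y := fun h => hbx (hy ▸ h.apply_right)
  have hpow := pow_splitCycle_apply_of_not_sameCycle hbe hbx hby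
  have htransfer {c : α} (hc : ¬ σ.SameCycle b c) : ¬ (splitCycle e x y σ).SameCycle b c := by
    intro h
    obtain ⟨i, rfl⟩ := h.exists_nat_pow_eq
    exact hc (hpow i ▸ (Perm.SameCycle.refl σ b).pow_right)
  rw [pow_splitCycle_apply_of_not_sameCycle (htransfer hbe) (htransfer hbx), hpow]
  refine fun h => htransfer hbx (h.trans ?_)
  rw [← zpow_natCast, ← zpow_neg_one, ← zpow_mul]
  exact Perm.SameCycle.symm ⟨_, rfl⟩

end SplitCycle

/-! ### Odd renamings from two vertices of equal angle -/

section Transplant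

open Function (minimalPeriod)

variable {L : Type*}

lemma IsLabeled.standard_nodup {a : L} {U V : List L} (hl : IsLabeled (a :: U, V ++ [a])) :
    U.Nodup ∧ V.Nodup :=
  ⟨(List.nodup_cons.1 hl.1.1).2, (List.nodup_append.1 hl.2.1).1⟩

lemma IsLabeled.standard_perm {a : L} {U V : List L} (hl : IsLabeled (a :: U, V ++ [a])) :
    U.Perm V :=
  (hl.perm.trans (List.perm_append_singleton a V)).cons_inv

lemma IsLabeled.of_mapPair {p : List L × List L} {σ : Perm L} (h : IsLabeled (mapPair σ p)) :
    IsLabeled p :=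
  ⟨⟨h.1.1.of_map σ, fun b => (List.mem_map_of_injective σ.injective).1 (h.1.2 (σ b))⟩,
    h.2.1.of_map σ, fun b => (List.mem_map_of_injective σ.injective).1 (h.2.2 (σ b))⟩

lemma inv_mul_inv_apply_eq_self {τ β : Perm L} {e : L} (hτ : τ e = e)
    (hβ : β e = e) : (τ * β⁻¹)⁻¹ e = e := by
  rw [Perm.inv_eq_iff_eq, Perm.mul_apply, Perm.inv_eq_iff_eq.2 hβ.symm, hτ]

variable [DecidableEq L]

lemma isRotated_of_formPerm_eq {U U' : List L} (hn : U.Nodup) (hp : U.Perm U')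
    (h : U.formPerm = U'.formPerm) : U ~r U' := by
  rcases (List.formPerm_eq_formPerm_iff hn (hp.nodup_iff.1 hn)).1 h with hrot | ⟨hlen, -⟩
  · exact hrot
  · rcases U with _ | ⟨a, _ | ⟨b, U⟩⟩
    · rw [List.nil_perm.1 hp]
    · rw [List.singleton_perm.1 hp]
    · simp at hlen

lemma removePoint_formPerm_cons {e : L} {s : List L} (h : e ∉ s) :
    removePoint e (e :: s).formPerm = s.formPerm := by
  rcases s with _ | ⟨α, s⟩
  · rw [List.formPerm_singleton, removePoint, Perm.one_apply, swap_self]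
    exact one_mul 1
  · rw [List.formPerm_cons_cons, removePoint_swap_mul (List.formPerm_apply_of_notMem h)]

lemma formPerm_append_cons_cons_apply {u v : List L} {x y : L} (h : (u ++ x :: y :: v).Nodup) :
    (u ++ x :: y :: v).formPerm x = y := by
  have hx : x ∉ u ++ y :: v := by grind
  rw [formPerm_append_cons_cons h, Perm.mul_apply, List.formPerm_apply_of_notMem hx,
    swap_apply_left]

lemma formPerm_of_isRotated_cons_cons {l w : List L} {e y : L} (hn : l.Nodup)
    (h : l ~r e :: y :: w) :
    l.formPerm e = y ∧ removePoint e l.formPerm = (y :: w).formPerm := by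
  have hn' := h.nodup_iff.1 hn
  rw [List.formPerm_eq_of_isRotated hn h]
  exact ⟨formPerm_append_cons_cons_apply (u := []) hn',
    removePoint_formPerm_cons (List.nodup_cons.1 hn').1⟩

lemma formPerm_of_isRotated_concat_concat {l u : List L} {x e : L} (hn : l.Nodup)
    (h : l ~r u ++ [x] ++ [e]) :
    l.formPerm x = e ∧ removePoint e l.formPerm = (u ++ [x]).formPerm := by
  constructor
  · rw [List.formPerm_eq_of_isRotated hn h, List.append_assoc]
    exact formPerm_append_cons_cons_apply (v := []) (by simpa using h.nodup_iff.1 hn)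
  · have hcons := h.trans (List.isRotated_concat e _)
    rw [List.formPerm_eq_of_isRotated hn hcons,
      removePoint_formPerm_cons (List.nodup_cons.1 (hcons.nodup_iff.1 hn)).1]

lemma reach_transplant {a e x y : L} {u₁ u₂ P w w₁ w₂ : List L}
    (hl : IsLabeled (a :: (u₁ ++ y :: u₂ ++ [e]), e :: y :: w ++ [a]))
    (hx : y :: u₂ = P ++ [x]) (hw : y :: w = w₁ ++ x :: w₂) :
    Reach (a :: (u₁ ++ y :: u₂ ++ [e]), e :: y :: w ++ [a])
      (mapPair (swap e y) (a :: (u₁ ++ e :: y :: u₂), w₁ ++ x :: e :: w₂ ++ [a])) := by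
  have hrot_bot : Reach (a :: (u₁ ++ y :: u₂ ++ [e]), e :: y :: w ++ [a])
      (a :: (u₁ ++ y :: u₂ ++ [e]), e :: (w ++ [a, y])) := by
    simpa using reach_rotate_right (a :: (u₁ ++ y :: u₂)) e []
      (List.isRotated_concat y (w ++ [a])).symm
  have hrot_top : Reach (a :: (u₁ ++ y :: u₂ ++ [e]), e :: (w ++ [a, y]))
      (a :: (u₁ ++ y :: e :: u₂), e :: (w ++ [a, y])) := by
    simpa using (reach_rotate_right (e :: (w ++ [a])) y (a :: u₁)
      (List.isRotated_concat e u₂)).swap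
  have hexchange : (a :: (u₁ ++ y :: e :: u₂), e :: (w ++ [a, y])) =
      mapPair (swap e y) (a :: (u₁ ++ e :: y :: u₂), y :: w ++ [a, e]) := by
    obtain ⟨⟨htop, -⟩, hbot, -⟩ := hl
    simp only [List.nodup_cons, List.nodup_append, List.mem_append, List.mem_cons,
      List.cons_append] at htop hbot
    have hmap {l : List L} (hl : e ∉ l ∧ y ∉ l) : l.map (swap e y) = l :=
      List.map_congr_left (g := id)
        (fun b hb => swap_apply_of_ne_of_ne (by grind) (by grind)) |>.trans (List.map_id l)
    have ha : swap e y a = a := swap_apply_of_ne_of_ne (by grind) (by grind)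
    have hu₁ : u₁.map (swap e y) = u₁ := hmap (by grind)
    have hu₂ : u₂.map (swap e y) = u₂ := hmap (by grind)
    have hw : w.map (swap e y) = w := hmap (by grind)
    simp [mapPair, ha, hu₁, hu₂, hw]
  have hinsert : Reach (a :: (u₁ ++ e :: y :: u₂), y :: w ++ [a, e])
      (a :: (u₁ ++ e :: y :: u₂), w₁ ++ x :: e :: w₂ ++ [a]) := by
    rw [hx, hw]
    simpa using reach_rotate_right (a :: (u₁ ++ e :: P)) x w₁
      (List.isRotated_concat e (w₂ ++ [a]))
  exact hrot_bot.trans (hrot_top.trans (hexchange ▸ hinsert.map (swap e y)))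

/-- From `p` one reaches the renaming by `σ` of a standard pair `(a U, V a)` whose cyclic words
`U` and `V` are encoded by the permutations `τ` and `β`. -/
def StandardReach (p : List L × List L) (a : L) (τ β σ : Perm L) : Prop :=
  ∃ U V : List L, IsLabeled (a :: U, V ++ [a]) ∧ U.formPerm = τ ∧ V.formPerm = β ∧
    Reach p (mapPair σ (a :: U, V ++ [a]))

variable {p : List L × List L} {a e : L} {τ β σ σ' : Perm L}

lemma StandardReach.mul_inv_mem_renamingGroup (h : StandardReach p a τ β σ)
    (h' : StandardReach p a τ β σ') : σ' * σ⁻¹ ∈ renamingGroup p := by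
  obtain ⟨U, V, hl, hτ, hβ, hreach⟩ := h
  obtain ⟨U', V', hl', rfl, rfl, hreach'⟩ := h'
  have hperm : U.Perm U' := ((List.perm_ext_iff_of_nodup hl.1.1 hl'.1.1).2 fun b =>
    iff_of_true (hl.1.2 b) (hl'.1.2 b)).cons_inv
  have hrot := reach_rotate_standard a (isRotated_of_formPerm_eq hl.standard_nodup.1 hperm hτ)
    (isRotated_of_formPerm_eq hl.standard_nodup.2
      (hl.standard_perm.symm.trans (hperm.trans hl'.standard_perm)) hβ)
  have hback := hreach.map (σ' * σ⁻¹ : Perm L)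
  rw [mapPair_mapPair, ← Perm.coe_mul, inv_mul_cancel_right] at hback
  exact (hreach'.trans (hrot.map σ').symm).trans hback.symm

lemma IsLabeled.exists_isRotated_transplant {U V : List L} (hl : IsLabeled (a :: U, V ++ [a]))
    (he : e ≠ a) (hU : U.formPerm e ≠ e) :
    ∃ u₁ y u₂ w, U ~r u₁ ++ y :: u₂ ++ [e] ∧ V ~r e :: y :: w := by
  have heU : e ∈ U := by simpa [he] using hl.1.2 e
  obtain ⟨s, hs⟩ := exists_isRotated_concat heU
  obtain ⟨t, ht⟩ := exists_isRotated_cons (hl.standard_perm.mem_iff.1 heU)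
  have hperm : s.Perm t :=
    (((List.perm_append_singleton e s).symm.trans hs.perm.symm).trans
      (hl.standard_perm.trans ht.perm)).cons_inv
  have hlen := (List.formPerm_apply_mem_ne_self_iff U hl.standard_nodup.1 e heU).1 hU
  rcases t with _ | ⟨y, w⟩
  · simp [hs.perm.length_eq, List.perm_nil.1 hperm] at hlen
  · obtain ⟨u₁, u₂, rfl⟩ := List.append_of_mem (hperm.mem_iff.2 List.mem_cons_self)
    exact ⟨u₁, y, u₂, w, hs, ht⟩

lemma StandardReach.transplant (h : StandardReach p a τ β σ) (he : e ≠ a) (hτ : τ e ≠ e) :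
    StandardReach p a (swap e (β e) * removePoint e τ) (removePoint e β * swap (τ⁻¹ e) e)
      (σ * swap e (β e)) := by
  obtain ⟨U, V, hl, rfl, rfl, hreach⟩ := h
  obtain ⟨u₁, y, u₂, w, hU, hV⟩ := hl.exists_isRotated_transplant he hτ
  obtain ⟨P, x, hx⟩ := (List.eq_nil_or_concat' (y :: u₂)).resolve_left (List.cons_ne_nil y u₂)
  have hu : u₁ ++ y :: u₂ = u₁ ++ P ++ [x] := by rw [hx, List.append_assoc]
  obtain ⟨hτx, hτh⟩ := formPerm_of_isRotated_concat_concat hl.standard_nodup.1 (hu ▸ hU)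
  obtain ⟨hβe, hβh⟩ := formPerm_of_isRotated_cons_cons hl.standard_nodup.2 hV
  have hperm : (u₁ ++ y :: u₂).Perm (y :: w) :=
    (((List.perm_append_singleton e _).symm.trans hU.perm.symm).trans
      (hl.standard_perm.trans hV.perm)).cons_inv
  obtain ⟨w₁, w₂, hw⟩ := List.append_of_mem (hperm.mem_iff.1 (show x ∈ u₁ ++ y :: u₂ by simp [hu]))
  have hrot := reach_rotate_standard a hU hV
  have hl' := hl.of_reach hrot
  have hstep := reach_transplant hl' hx hw
  have hl'' := (hl'.of_reach hstep).of_mapPair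
  rw [hβe, hτh, hβh, Perm.inv_eq_iff_eq.2 hτx.symm, ← hu, hw]
  refine ⟨u₁ ++ e :: y :: u₂, w₁ ++ x :: e :: w₂, hl'', ?_, ?_, ?_⟩
  · exact formPerm_append_cons_cons hl''.standard_nodup.1
  · exact formPerm_append_cons_cons' hl''.standard_nodup.2
  · have := hreach.trans (Reach.map σ (hrot.trans hstep))
    rwa [mapPair_mapPair, ← Perm.coe_mul] at this

lemma StandardReach.transplant_swap {α γ : L} {τh βh : Perm L} (he : e ≠ a) (hτ : τh e = e)
    (hβ : βh e = e) (hα : α ≠ e)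
    (h : StandardReach p a (swap e α * τh) (swap e γ * βh) σ) :
    StandardReach p a (swap e γ * τh) (swap e ((τh * βh⁻¹)⁻¹ α) * βh) (σ * swap e γ) := by
  have hτe : (swap e α * τh) e = α := by rw [Perm.mul_apply, hτ, swap_apply_left]
  have hβe : (swap e γ * βh) e = γ := by rw [Perm.mul_apply, hβ, swap_apply_left]
  have := h.transplant he (by rwa [hτe])
  rw [hβe, removePoint_swap_mul hτ, removePoint_swap_mul hβ, mul_swap_eq_swap_mul, hβ,
    swap_comm _ e] at this
  simpa using this

lemma StandardReach.apply_ne_self_iff (h : StandardReach p a τ β σ) (he : e ≠ a) :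
    τ e ≠ e ↔ β e ≠ e := by
  obtain ⟨U, V, hl, rfl, rfl, -⟩ := h
  have heU : e ∈ U := by simpa [he] using hl.1.2 e
  rw [List.formPerm_apply_mem_ne_self_iff U hl.standard_nodup.1 e heU,
    List.formPerm_apply_mem_ne_self_iff V hl.standard_nodup.2 e
      (hl.standard_perm.mem_iff.1 heU), hl.standard_perm.length_eq]

lemma StandardReach.apply_eq_self (h : StandardReach p a τ β σ) : τ a = a := by
  obtain ⟨U, V, hl, rfl, -⟩ := h
  exact List.formPerm_apply_of_notMem (List.nodup_cons.1 hl.1.1).1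

lemma removePoint_mul_inv_removePoint (e : L) (τ β : Perm L) :
    removePoint e τ * (removePoint e β)⁻¹ = splitCycle e (τ e) (β e) (τ * β⁻¹) := by
  simp only [removePoint, splitCycle, mul_inv_rev, swap_inv, mul_assoc]

lemma swap_mul_removePoint (e : L) (τ : Perm L) : swap e (τ e) * removePoint e τ = τ :=
  swap_mul_self_mul e (τ e) τ

lemma mul_inv_swap_mul_removePoint (e z : L) (τ β : Perm L) :
    τ * (swap e z * removePoint e β)⁻¹ =
      splitCycle e (τ e) z (splitCycle e (τ e) (β e) (τ * β⁻¹)) := by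
  rw [← removePoint_mul_inv_removePoint]
  conv_lhs => rw [← swap_mul_removePoint e τ]
  simp only [splitCycle, mul_inv_rev, swap_inv, mul_assoc]

variable [Fintype L]

lemma sign_mul_swap (σ : Perm L) {x y : L} (h : x ≠ y) :
    Perm.sign (σ * swap x y) = -Perm.sign σ := by
  rw [Perm.sign_mul, Perm.sign_swap h, mul_neg_one]

section Flip

variable {α γ : L} {τh βh : Perm L} (he : e ≠ a) (hτ : τh e = e) (hβ : βh e = e)
include he hτ hβ

lemma StandardReach.exists_sign_eq (m : ℕ) (hα : α ≠ e) (hγ : γ ≠ e)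
    (h : StandardReach p a (swap e α * τh) (swap e γ * βh) σ) :
    ∃ σ', Perm.sign σ' = Perm.sign σ ∧ StandardReach p a
      (swap e (((τh * βh⁻¹)⁻¹ ^ m) α) * τh) (swap e (((τh * βh⁻¹)⁻¹ ^ m) γ) * βh) σ' := by
  induction m generalizing α γ σ with
  | zero => exact ⟨σ, rfl, h⟩
  | succ m ih =>
    have hfix := inv_mul_inv_apply_eq_self hτ hβ
    have hne {x : L} (hx : x ≠ e) : (τh * βh⁻¹)⁻¹ x ≠ e := by
      simpa using pow_apply_ne_of_fixed hfix hx 1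
    obtain ⟨σ', hsign, h'⟩ := ih (hne hα) (hne hγ)
      ((h.transplant_swap he hτ hβ hα).transplant_swap he hτ hβ hγ)
    refine ⟨σ', ?_, h'⟩
    rw [hsign, sign_mul_swap _ (hne hα).symm, sign_mul_swap _ hγ.symm, neg_neg]

lemma StandardReach.exists_sign_eq_neg {m : ℕ} (hα : α ≠ e) (hγ : γ ≠ e)
    (hm : ((τh * βh⁻¹) ^ m) α = γ)
    (h : StandardReach p a (swap e α * τh) (swap e γ * βh) σ) :
    ∃ σ', Perm.sign σ' = -Perm.sign σ ∧ StandardReach p a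
      (swap e α * τh) (swap e (((τh * βh⁻¹)⁻¹ ^ (m + 1)) α) * βh) σ' := by
  have hfix := inv_mul_inv_apply_eq_self hτ hβ
  obtain ⟨σ', hsign, h'⟩ := h.exists_sign_eq he hτ hβ m hα hγ
  have hback : ((τh * βh⁻¹)⁻¹ ^ m) γ = α := by rw [inv_pow, Perm.inv_eq_iff_eq, hm]
  rw [hback] at h'
  refine ⟨σ' * swap e α, by rw [sign_mul_swap _ hα.symm, hsign], ?_⟩
  rw [pow_succ', Perm.mul_apply]
  exact h'.transplant_swap he hτ hβ (pow_apply_ne_of_fixed hfix hα m)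

end Flip

-- The lengths of the cycles of `τ * β⁻¹` through `e` and `τ e` are exchanged.
lemma StandardReach.exists_sign_eq_neg_splitCycle (h : StandardReach p a τ β σ) (he : e ≠ a)
    (hτ : τ e ≠ e) (hβ : β e ≠ e) (hsame : ¬ (τ * β⁻¹).SameCycle (τ e) e) :
    ∃ σ', Perm.sign σ' = -Perm.sign σ ∧ StandardReach p a τ
      (swap e (((splitCycle e (τ e) (β e) (τ * β⁻¹))⁻¹ ^ minimalPeriod (τ * β⁻¹) (τ e)) (τ e)) *
        removePoint e β) σ' := by
  have hy : (τ * β⁻¹) (β e) = τ e := by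
    rw [Perm.mul_apply, Perm.inv_def, symm_apply_apply]
  rw [← swap_mul_removePoint e τ, ← swap_mul_removePoint e β] at h
  obtain ⟨σ', hsign, h'⟩ := h.exists_sign_eq_neg he (removePoint_apply_self e τ)
    (removePoint_apply_self e β) hτ hβ (m := minimalPeriod (τ * β⁻¹) (τ e) - 1) (by
      rw [removePoint_mul_inv_removePoint, pow_splitCycle_pred_minimalPeriod hy hsame])
  rw [removePoint_mul_inv_removePoint, swap_mul_removePoint,
    Nat.sub_add_cancel (minimalPeriod_perm_pos _ _)] at h'
  exact ⟨σ', hsign, h'⟩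

-- Walk along the top word from `b` to `c = τ ^ n b`, carrying along the angle of `b`.
lemma StandardReach.exists_sign_eq_neg_one {n : ℕ} {b c : L} (h : StandardReach p a τ β σ)
    (hb : b ≠ a) (hbc : (τ ^ n) b = c) (hsame : ¬ (τ * β⁻¹).SameCycle b c)
    (hperiod : minimalPeriod (τ * β⁻¹) b = minimalPeriod (τ * β⁻¹) c) :
    ∃ σ ∈ renamingGroup p, Perm.sign σ = -1 := by
  induction n generalizing β σ b with
  | zero => exact absurd (hbc ▸ .rfl) hsame
  | succ n ih =>
    have hbc' : (τ ^ n) (τ b) = c := by rw [← hbc, pow_succ, Perm.mul_apply]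
    have hτb : τ b ≠ b := fun hτb =>
      hsame (hbc ▸ (Perm.pow_apply_eq_self_of_apply_eq_self hτb (n + 1)).symm ▸ .rfl)
    have hτba : τ b ≠ a := by simpa using pow_apply_ne_of_fixed h.apply_eq_self hb 1
    set κ := τ * β⁻¹ with hκ
    by_cases hnext : κ.SameCycle (τ b) b
    · exact ih h hτba hbc' (fun hsame' => hsame (hnext.symm.trans hsame'))
        (by rw [← hperiod, minimalPeriod_eq_of_sameCycle hnext])
    have hy : κ (β b) = τ b := by rw [hκ, Perm.mul_apply, Perm.inv_def, symm_apply_apply]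
    obtain ⟨σ', hsign, h'⟩ := h.exists_sign_eq_neg_splitCycle hb hτb
      ((h.apply_ne_self_iff hb).1 hτb) hnext
    rw [← hκ] at h'
    by_cases heq : minimalPeriod κ b = minimalPeriod κ (τ b)
    · rw [inv_pow_splitCycle_of_minimalPeriod_eq hy hnext heq, swap_mul_removePoint] at h'
      refine ⟨_, h.mul_inv_mem_renamingGroup h', ?_⟩
      rw [Perm.sign_mul, hsign, Perm.sign_inv, neg_mul, Int.units_mul_self]
    · have hcb : ¬ κ.SameCycle c b := fun hcb => hsame hcb.symm
      have hcτb : ¬ κ.SameCycle c (τ b) := fun hc =>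
        heq (hperiod.trans (minimalPeriod_eq_of_sameCycle hc))
      have hpow := pow_splitCycle_inv_pow_apply hy hcb hcτb (minimalPeriod κ (τ b))
      refine ih h' hτba hbc' ?_ ?_
      all_goals rw [mul_inv_swap_mul_removePoint, ← hκ]
      · intro hsame'
        obtain ⟨i, hi⟩ := hsame'.symm.exists_nat_pow_eq
        exact hcτb (hi ▸ hpow i ▸ (Perm.SameCycle.refl κ c).pow_right)
      · rw [minimalPeriod_splitCycle_inv_pow hy hnext, hperiod]
        exact minimalPeriod_eq_of_forall_pow_apply fun n => by rw [hpow]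

theorem exists_mem_renamingGroup_sign_eq_neg_one [Nontrivial L] (hl : IsLabeled p)
    (hi : IsIrreducible p) (hp : ¬ HasDistinctAngles p) :
    ∃ σ ∈ renamingGroup p, Perm.sign σ = -1 := by
  obtain ⟨a, U, V, hstd⟩ := hi.exists_reach_standard hl
  have hl' := hl.of_reach hstd
  have hangles : ¬ HasDistinctAngles (a :: U, V ++ [a]) := fun h => hp (.of_reach hstd hl h)
  rw [(isIrreducible_standard hl').hasDistinctAngles_iff hl', cornerPerm_standard hl',
    wordCycle_cons_apply_none hl'.1.1] at hangles
  push Not at hangles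
  obtain ⟨b, c, hb, hc, hperiod, hsame⟩ := hangles
  have hmem {x : L} (hx : some x ≠ some a) : x ∈ U := by
    simpa [Option.some_inj.ne.1 hx] using hl'.1.2 x
  have hbc : b ≠ c := fun h => hsame (h ▸ .rfl)
  have hlen : 2 ≤ U.length := by
    have : [b, c].Subperm U := List.subperm_of_subset (by simp [hbc]) (by simp [hmem hb, hmem hc])
    simpa using this.length_le
  have hcycle := List.isCycle_formPerm hl'.standard_nodup.1 hlen
  have hmoved {x : L} (hx : x ∈ U) : U.formPerm x ≠ x :=
    (List.formPerm_apply_mem_ne_self_iff U hl'.standard_nodup.1 x hx).2 hlen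
  obtain ⟨n, hn⟩ := (hcycle.sameCycle (hmoved (hmem hb)) (hmoved (hmem hc))).exists_nat_pow_eq
  refine StandardReach.exists_sign_eq_neg_one (τ := U.formPerm) (β := V.formPerm) (σ := 1)
    ⟨U, V, hl', rfl, rfl, ?_⟩ (by simpa using hb) hn hsame hperiod
  rwa [Perm.coe_one, mapPair_id]

end Transplant

/-! ### The words of a labeled pair -/

section WordOf

variable {L : Type*} {n : ℕ}

/-- The word listing the letters in the order of their positions under `e`. -/
def word (e : L ≃ Fin n) : List L := List.ofFn e.symm

lemma length_word (e : L ≃ Fin n) : (word e).length = n := List.length_ofFn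

lemma nodup_word (e : L ≃ Fin n) : (word e).Nodup := List.nodup_ofFn.2 e.symm.injective

lemma mem_word (e : L ≃ Fin n) (b : L) : b ∈ word e :=
  List.mem_ofFn.2 ⟨e b, e.symm_apply_apply b⟩

lemma word_injective : Function.Injective (word : (L ≃ Fin n) → List L) := fun _ _ h =>
  symm_bijective.injective (coe_fn_injective (List.ofFn_injective h))

lemma exists_word_eq {l : List L} (e : L ≃ Fin n) (hl : (word e).Perm l) :
    ∃ e' : L ≃ Fin n, word e' = l := by
  obtain rfl : l.length = n := hl.length_eq.symm.trans (length_word e)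
  have hbij : Function.Bijective l.get :=
    ⟨List.nodup_iff_injective_get.1 (hl.nodup_iff.1 (nodup_word e)),
      fun b => List.get_of_mem (hl.mem_iff.1 (mem_word e b))⟩
  exact ⟨(ofBijective _ hbij).symm, List.ofFn_get l⟩

lemma val_eq_idxOf_word [DecidableEq L] (e : L ≃ Fin n) (b : L) : (e b : ℕ) = (word e).idxOf b := by
  have hlt : (e b : ℕ) < (word e).length := by rw [length_word]; exact (e b).isLt
  have hget : (word e)[(e b : ℕ)] = b := by simp [word]
  conv_rhs => rw [← hget]
  rw [(nodup_word e).idxOf_getElem]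

lemma forall_le_iff_word_eq_concat {e : L ≃ Fin n} {z : L} :
    (∀ x, e x ≤ e z) ↔ ∃ P, word e = P ++ [z] := by
  classical
  have hmem := mem_word e
  have hnodup := nodup_word e
  simp only [Fin.le_def, val_eq_idxOf_word]
  constructor
  · intro h
    obtain ⟨P, y, hP⟩ := (List.eq_nil_or_concat' (word e)).resolve_left
      (List.ne_nil_of_mem (hmem z))
    have hy := h y
    rw [hP] at hmem hnodup hy
    exact ⟨P, by grind⟩
  · rintro ⟨P, hP⟩ x
    rw [hP] at hmem hnodup ⊢
    grind

lemma forall_ge_iff_word_eq_cons {e : L ≃ Fin n} {z : L} :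
    (∀ x, e z ≤ e x) ↔ ∃ P, word e = z :: P := by
  classical
  simp only [Fin.le_def, val_eq_idxOf_word]
  constructor
  · intro h
    obtain ⟨y, P, hP⟩ := List.exists_cons_of_ne_nil (List.ne_nil_of_mem (mem_word e z))
    have hy := h y
    rw [hP] at hy
    exact ⟨P, by grind⟩
  · rintro ⟨P, hP⟩ x
    simp [hP]

/-- The arrangement `e'` is obtained from `e` by moving its last letter `y` right behind `z`: the
effect of a right Rauzy induction on the word that changes. -/
def IsRightShift (e e' : L ≃ Fin n) (z y : L) : Prop :=
  (∀ x, e x ≤ e y) ∧ (∀ b, e b ≤ e z → e' b = e b) ∧ ((e' y : ℕ) = (e z : ℕ) + 1) ∧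
    ∀ b, ¬ e b ≤ e z → b ≠ y → (e' b : ℕ) = (e b : ℕ) + 1

/-- The arrangement `e'` is obtained from `e` by moving its first letter `y` right before `a`: the
effect of a left Rauzy induction on the word that changes. -/
def IsLeftShift (e e' : L ≃ Fin n) (a y : L) : Prop :=
  (∀ x, e y ≤ e x) ∧ (∀ b, e a ≤ e b → e' b = e b) ∧ ((e' y : ℕ) = (e a : ℕ) - 1) ∧
    ∀ b, ¬ e a ≤ e b → b ≠ y → (e' b : ℕ) = (e b : ℕ) - 1

variable {e e' e'' : L ≃ Fin n} {a y z : L} {R T : List L}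

lemma isRightShift_of_word_eq (h : word e = R ++ z :: (T ++ [y]))
    (h' : word e' = R ++ z :: y :: T) : IsRightShift e e' z y := by
  classical
  have hnodup := nodup_word e
  have hmem := mem_word e
  simp only [IsRightShift, Fin.le_def, Fin.ext_iff, val_eq_idxOf_word, h, h'] at hnodup hmem ⊢
  refine ⟨?_, ?_, ?_, ?_⟩ <;> grind

lemma isLeftShift_of_word_eq (h : word e = y :: (T ++ a :: R))
    (h' : word e' = T ++ y :: a :: R) : IsLeftShift e e' a y := by
  classical
  have hnodup := nodup_word e
  have hmem := mem_word e
  simp only [IsLeftShift, Fin.le_def, Fin.ext_iff, val_eq_idxOf_word, h, h'] at hnodup hmem ⊢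
  refine ⟨?_, ?_, ?_, ?_⟩ <;> grind

lemma IsRightShift.unique (h : IsRightShift e e' z y) (h' : IsRightShift e e'' z y) :
    e' = e'' := by
  ext b
  by_cases hb : e b ≤ e z
  · rw [h.2.1 b hb, h'.2.1 b hb]
  · by_cases hy : b = y
    · rw [hy, h.2.2.1, h'.2.2.1]
    · rw [h.2.2.2 b hb hy, h'.2.2.2 b hb hy]

lemma IsLeftShift.unique (h : IsLeftShift e e' a y) (h' : IsLeftShift e e'' a y) :
    e' = e'' := by
  ext b
  by_cases hb : e a ≤ e b
  · rw [h.2.1 b hb, h'.2.1 b hb]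
  · by_cases hy : b = y
    · rw [hy, h.2.2.1, h'.2.2.1]
    · rw [h.2.2.2 b hb hy, h'.2.2.2 b hb hy]

lemma IsRightShift.exists_word_eq (h : IsRightShift e e' z y) :
    ∃ R T, word e = R ++ z :: (T ++ [y]) ∧ word e' = R ++ z :: y :: T := by
  obtain ⟨P, hP⟩ := forall_le_iff_word_eq_concat.1 h.1
  have hzy : z ≠ y := by
    rintro rfl
    have := h.2.2.1
    rw [h.2.1 z le_rfl] at this
    omega
  have hz : z ∈ P := by simpa [hP, hzy] using mem_word e z
  obtain ⟨R, T, rfl⟩ := List.append_of_mem hz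
  have he : word e = R ++ z :: (T ++ [y]) := by simpa using hP
  obtain ⟨f, hf⟩ := Rauzy.exists_word_eq e (l := R ++ z :: y :: T)
    (he ▸ (RauzyStep.right [] z R T y).perm.2)
  exact ⟨R, T, he, h.unique (isRightShift_of_word_eq he hf) ▸ hf⟩

lemma IsLeftShift.eq_or_exists_word_eq (h : IsLeftShift e e' a y) :
    e' = e ∨ ∃ T R, word e = y :: (T ++ a :: R) ∧ word e' = T ++ y :: a :: R := by
  obtain ⟨P, hP⟩ := forall_ge_iff_word_eq_cons.1 h.1
  by_cases hay : a = y
  · subst hay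
    exact .inl (Equiv.ext fun b => h.2.1 b (h.1 b))
  · have ha : a ∈ P := by simpa [hP, hay] using mem_word e a
    obtain ⟨T, R, rfl⟩ := List.append_of_mem ha
    obtain ⟨f, hf⟩ := exists_word_eq e (l := T ++ y :: a :: R)
      (hP ▸ (RauzyStep.left a [] y T R).perm.2)
    exact .inr ⟨T, R, hP, h.unique (isLeftShift_of_word_eq hP hf) ▸ hf⟩

end WordOf

/-! ### Extended Rauzy classes -/

section ExtendedClass

open Relation

/-- The pair of words (top word, bottom word) of a labeled pair. -/
def wordPair (π : RPair A) : List A × List A := (word (π false), word (π true))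

lemma isLabeled_wordPair (π : RPair A) : IsLabeled (wordPair π) :=
  ⟨⟨nodup_word _, mem_word _⟩, nodup_word _, mem_word _⟩

lemma wordPair_injective : Function.Injective (wordPair : RPair A → List A × List A) := by
  intro π ρ h
  obtain ⟨htop, hbot⟩ := Prod.mk.inj h
  funext ε
  cases ε
  exacts [word_injective htop, word_injective hbot]

lemma exists_wordPair_eq (π : RPair A) {p : List A × List A} (h : Reach (wordPair π) p) :
    ∃ ρ : RPair A, wordPair ρ = p := by
  obtain ⟨e₀, he₀⟩ := exists_word_eq (π false) h.perm.1
  obtain ⟨e₁, he₁⟩ := exists_word_eq (π true) h.perm.2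
  exact ⟨fun ε => cond ε e₁ e₀, Prod.ext he₀ he₁⟩

lemma reach_wordPair_of_reach {π ρ : RPair A} {ε : Bool}
    (h : Reach (word (π ε), word (π !ε)) (word (ρ ε), word (ρ !ε))) :
    Reach (wordPair π) (wordPair ρ) := by
  cases ε
  exacts [h, h.swap]

lemma wordPair_pairRename (π : RPair A) (ν : Perm A) :
    wordPair (pairRename π ν) = mapPair ⇑ν⁻¹ (wordPair π) := by
  simp only [wordPair, mapPair, word, List.map_ofFn]
  rfl

lemma nonlabeled_pairRename (π : RPair A) (ν : Perm A) :
    nonlabeled (pairRename π ν) = nonlabeled π := by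
  ext x
  simp [nonlabeled, pairRename]

lemma exists_eq_pairRename {π ρ : RPair A} (h : nonlabeled π = nonlabeled ρ) :
    ∃ ν : Perm A, ρ = pairRename π ν := by
  refine ⟨(ρ false).trans (π false).symm, ?_⟩
  funext ε
  ext x : 1
  cases ε
  · simp [pairRename]
  · simpa [nonlabeled, pairRename] using (DFunLike.congr_fun h (ρ false x)).symm

lemma pairRename_injective (π : RPair A) : Function.Injective (pairRename π) := by
  intro ν ν' h
  ext x
  simpa [pairRename] using DFunLike.congr_fun (congrFun h false) x

lemma isIrreducible_wordPair {π : RPair A} (h : PairIrreducible π) :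
    IsIrreducible (wordPair π) := by
  classical
  intro u v u' v' he hu
  obtain ⟨htop, hbot⟩ := Prod.mk.inj he
  by_contra! hne
  have hlen : u.length + v.length = Fintype.card A := by
    rw [← List.length_append, ← htop, length_word]
  have hu_pos := List.length_pos_iff.2 hne.1
  have hv_pos := List.length_pos_iff.2 hne.2
  have hblock := h ⟨u.length - 1, by omega⟩ fun x hx => by
    simp only [Fin.le_def, val_eq_idxOf_word, htop, hbot] at hx ⊢
    have hxu : x ∈ u := by grind
    have hxu' := hu.mem_iff.1 hxu
    grind [hu.length_eq]
  dsimp only at hblock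
  omega

lemma reach_of_rightMove {π ρ : RPair A} (h : RightMove π ρ) :
    Reach (wordPair π) (wordPair ρ) := by
  obtain ⟨ε, z, y, hz, hy, hε, hshift⟩ := h
  obtain ⟨P, hP⟩ := forall_le_iff_word_eq_concat.1 hz
  obtain ⟨R, T, hπ, hρ⟩ := IsRightShift.exists_word_eq ⟨hy, hshift⟩
  refine reach_wordPair_of_reach (ε := ε) ?_
  rw [hε, hP, hπ, hρ]
  exact .single (.right P z R T y)

lemma reach_of_leftMove {π ρ : RPair A} (h : LeftMove π ρ) :
    Reach (wordPair π) (wordPair ρ) := by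
  obtain ⟨ε, a, y, ha, hy, hε, hshift⟩ := h
  obtain ⟨P, hP⟩ := forall_ge_iff_word_eq_cons.1 ha
  refine reach_wordPair_of_reach (ε := ε) ?_
  rcases IsLeftShift.eq_or_exists_word_eq ⟨hy, hshift⟩ with heq | ⟨T, R, hπ, hρ⟩
  · rw [hε, heq]
  · rw [hε, hP, hπ, hρ]
    exact .single (.left a P y T R)

lemma RauzyStep.rightMove_or_leftMove {p q : List A × List A} (h : RauzyStep p q)
    {π ρ : RPair A} {ε : Bool} (hp : p = (word (π ε), word (π !ε)))
    (hq : q = (word (ρ ε), word (ρ !ε))) : RightMove π ρ ∨ LeftMove π ρ := by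
  induction h generalizing ε with
  | right P z R T y =>
    obtain ⟨hp₁, hp₂⟩ := Prod.mk.inj hp
    obtain ⟨hq₁, hq₂⟩ := Prod.mk.inj hq
    obtain ⟨hy, hshift⟩ := isRightShift_of_word_eq hp₂.symm hq₂.symm
    exact .inl ⟨ε, z, y, forall_le_iff_word_eq_concat.2 ⟨P, hp₁.symm⟩, hy,
      word_injective (hq₁.symm.trans hp₁), hshift⟩
  | left a P y T R =>
    obtain ⟨hp₁, hp₂⟩ := Prod.mk.inj hp
    obtain ⟨hq₁, hq₂⟩ := Prod.mk.inj hq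
    obtain ⟨hy, hshift⟩ := isLeftShift_of_word_eq hp₂.symm hq₂.symm
    exact .inr ⟨ε, a, y, forall_ge_iff_word_eq_cons.2 ⟨P, hp₁.symm⟩, hy,
      word_injective (hq₁.symm.trans hp₁), hshift⟩
  | swap _ ih =>
    refine ih (ε := !ε) ?_ ?_ <;> rw [Bool.not_not]
    exacts [Prod.swap_eq_iff_eq_swap.1 hp, Prod.swap_eq_iff_eq_swap.1 hq]

lemma mem_EClass_iff {π ρ : RPair A} : ρ ∈ EClass π ↔ Reach (wordPair π) (wordPair ρ) := by
  constructor
  · intro (h : ReflTransGen _ π ρ)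
    induction h with
    | refl => exact .refl
    | tail _ hmove ih => exact ih.trans (hmove.elim reach_of_rightMove reach_of_leftMove)
  · intro h
    generalize hq : wordPair ρ = q at h
    induction h generalizing ρ with
    | refl => exact wordPair_injective hq ▸ .refl
    | tail hreach hstep ih =>
      obtain ⟨ρ', rfl⟩ := exists_wordPair_eq π hreach
      exact ReflTransGen.tail (ih rfl) (hstep.rightMove_or_leftMove (ε := false) rfl hq.symm)

lemma pairRename_inv_mem_EClass_iff {π ρ : RPair A} {σ : Perm A} (hρ : ρ ∈ EClass π) :
    pairRename ρ σ⁻¹ ∈ EClass π ↔ σ ∈ renamingGroup (wordPair π) := by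
  have hreach := (mem_EClass_iff.1 hρ).map σ
  rw [mem_EClass_iff, wordPair_pairRename, inv_inv, mem_renamingGroup]
  exact ⟨fun h => h.trans hreach.symm, fun h => h.trans hreach⟩

-- Each fibre of `nonlabeled` on the class is a free orbit of the renaming group.
theorem ncard_EClass (π : RPair A) :
    (EClass π).ncard =
      Nat.card (renamingGroup (wordPair π)) * (nonlabeled '' EClass π).ncard := by
  have : Nonempty (RPair A) := ⟨π⟩
  obtain ⟨s, hs⟩ : ∃ s : Perm (Fin (Fintype.card A)) → RPair A,
      ∀ q ∈ nonlabeled '' EClass π, s q ∈ EClass π ∧ nonlabeled (s q) = q :=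
    ⟨_, fun q hq => Function.invFunOn_pos hq⟩
  have himage : EClass π = (fun x : Perm A × Perm (Fin (Fintype.card A)) =>
      pairRename (s x.2) x.1⁻¹) ''
        ((renamingGroup (wordPair π) : Set (Perm A)) ×ˢ (nonlabeled '' EClass π)) := by
    ext ρ
    constructor
    · intro hρ
      have hq : nonlabeled ρ ∈ nonlabeled '' EClass π := ⟨ρ, hρ, rfl⟩
      obtain ⟨hmem, hnonlabeled⟩ := hs _ hq
      obtain ⟨ν, hν⟩ := exists_eq_pairRename hnonlabeled
      refine ⟨(ν⁻¹, nonlabeled ρ), ⟨(pairRename_inv_mem_EClass_iff hmem).1 ?_, hq⟩, ?_⟩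
      · rwa [inv_inv, ← hν]
      · simp only [inv_inv, ← hν]
    · rintro ⟨⟨σ, q⟩, ⟨hσ, hq⟩, rfl⟩
      exact (pairRename_inv_mem_EClass_iff (hs q hq).1).2 hσ
  have hinj : Set.InjOn (fun x : Perm A × Perm (Fin (Fintype.card A)) =>
      pairRename (s x.2) x.1⁻¹)
        ((renamingGroup (wordPair π) : Set (Perm A)) ×ˢ (nonlabeled '' EClass π)) := by
    rintro ⟨σ, q⟩ ⟨-, hq⟩ ⟨σ', q'⟩ ⟨-, hq'⟩ h
    have hqq' := congrArg nonlabeled h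
    simp only [nonlabeled_pairRename, (hs _ hq).2, (hs _ hq').2] at hqq'
    subst hqq'
    exact Prod.ext (inv_injective (pairRename_injective _ h)) rfl
  conv_lhs => rw [himage, hinj.ncard_image, Set.ncard_prod]
  rfl

end ExtendedClass

/-! ### The permutations `S` and `Q` as vertex permutations -/

section Link

open Function (minimalPeriod)

lemma wordCycle_word_apply_of_val_eq {L : Type*} [DecidableEq L] {n : ℕ} {e : L ≃ Fin n}
    {a b : L} (h : (e b : ℕ) = e a + 1) : wordCycle (word e) (some a) = some b := by
  have hb := mem_word e b
  have hnodup := nodup_word e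
  simp only [val_eq_idxOf_word] at h
  obtain ⟨u, v, huv⟩ := List.append_of_mem (mem_word e a)
  obtain ⟨v', rfl⟩ : ∃ v', v = b :: v' := by
    cases v <;> grind
  rw [huv] at hnodup ⊢
  exact wordCycle_append_cons_cons_apply hnodup

variable [DecidableEq A]

lemma minimalPeriod_eq_card_support_cycleOf {Q : Perm A} {a : A} (ha : Q a ≠ a) :
    minimalPeriod Q a = (Q.cycleOf a).support.card := by
  rw [← ncard_sameCycle, ← Set.ncard_coe_finset]
  congr 1
  ext b
  rw [Finset.mem_coe, Perm.mem_support_cycleOf_iff, Perm.mem_support]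
  exact (and_iff_left ha).symm

lemma exists_eq_cycleOf_of_mem_cycleFactorsFinset {Q c : Perm A} (hc : c ∈ Q.cycleFactorsFinset) :
    ∃ a, Q a ≠ a ∧ c = Q.cycleOf a := by
  obtain ⟨hcycle, heq⟩ := Perm.mem_cycleFactorsFinset_iff.1 hc
  obtain ⟨a, ha, -⟩ := hcycle
  have hmem : a ∈ c.support := Perm.mem_support.2 ha
  exact ⟨a, heq a hmem ▸ ha, Perm.cycle_is_cycleOf hmem hc⟩

lemma nodup_cycleType_iff {Q : Perm A} : Q.cycleType.Nodup ↔
    ∀ a b, Q a ≠ a → Q b ≠ b → minimalPeriod Q a = minimalPeriod Q b → Q.SameCycle a b := by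
  rw [Perm.cycleType_def, Multiset.nodup_map_iff_inj_on Q.cycleFactorsFinset.nodup]
  constructor
  · intro h a b ha hb hab
    rw [minimalPeriod_eq_card_support_cycleOf ha, minimalPeriod_eq_card_support_cycleOf hb] at hab
    have hcycleOf : Q.cycleOf a = Q.cycleOf b :=
      h _ (Perm.cycleOf_mem_cycleFactorsFinset_iff.2 (Perm.mem_support.2 ha)) _
        (Perm.cycleOf_mem_cycleFactorsFinset_iff.2 (Perm.mem_support.2 hb)) hab
    have hmem : b ∈ (Q.cycleOf b).support :=
      Perm.mem_support_cycleOf_iff.2 ⟨.rfl, Perm.mem_support.2 hb⟩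
    exact (Perm.mem_support_cycleOf_iff.1 (hcycleOf ▸ hmem)).1
  · intro h c hc c' hc' hcard
    obtain ⟨a, ha, rfl⟩ := exists_eq_cycleOf_of_mem_cycleFactorsFinset hc
    obtain ⟨b, hb, rfl⟩ := exists_eq_cycleOf_of_mem_cycleFactorsFinset hc'
    refine (h a b ha hb ?_).cycleOf_eq
    rw [minimalPeriod_eq_card_support_cycleOf ha, minimalPeriod_eq_card_support_cycleOf hb]
    exact hcard

lemma nodup_lamOf_iff {Q : Perm A} {X : A} (hX : Q X = X) : (lamOf Q).Nodup ↔
    ∀ a b, a ≠ X → b ≠ X → minimalPeriod Q a = minimalPeriod Q b → Q.SameCycle a b := by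
  have hdisjoint (k : ℕ) : Disjoint Q.cycleType (Multiset.replicate k 1) := by
    refine Multiset.disjoint_left.2 fun hx hx' => ?_
    have := Perm.two_le_of_mem_cycleType hx
    rw [Multiset.eq_of_mem_replicate hx'] at this
    omega
  have hfix (a : A) : minimalPeriod Q a = 1 ↔ Q a = a :=
    Function.minimalPeriod_eq_one_iff_isFixedPt
  rw [lamOf, ← Finset.card_erase_of_mem (a := X) (by simpa using hX), Multiset.nodup_add,
    nodup_cycleType_iff, and_iff_left (hdisjoint _), ← Multiset.coe_replicate, Multiset.coe_nodup,
    List.nodup_replicate]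
  simp only [Finset.card_le_one, Finset.mem_erase, Finset.mem_filter_univ]
  constructor
  · rintro ⟨hcycle, hfixed⟩ a b ha hb hab
    by_cases hQa : Q a = a
    · have hQb : Q b = b := by rw [← hfix, ← hab, hfix, hQa]
      exact hfixed a ⟨ha, hQa⟩ b ⟨hb, hQb⟩ ▸ .rfl
    · exact hcycle a b hQa (by rwa [ne_eq, ← hfix, ← hab, hfix]) hab
  · refine fun h => ⟨fun a b ha hb => h a b ?_ ?_, fun a ha b hb => ?_⟩
    · exact fun haX => ha (haX ▸ hX)
    · exact fun hbX => hb (hbX ▸ hX)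
    · exact (h a b ha.1 hb.1 (by rw [(hfix a).2 ha.2, (hfix b).2 hb.2])).eq_of_left ha.2

variable [Nonempty A]

lemma wordCycle_word_apply_none {e : A ≃ Fin (Fintype.card A)} {a : A} (h : e a = posFirst A) :
    wordCycle (word e) none = some a := by
  obtain ⟨P, hP⟩ := forall_ge_iff_word_eq_cons.1 fun x => h.trans_le (Nat.zero_le (e x : ℕ))
  exact hP ▸ wordCycle_cons_apply_none (hP ▸ nodup_word e)

lemma wordCycle_word_apply_last {e : A ≃ Fin (Fintype.card A)} {a : A} (h : e a = posLast A) :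
    wordCycle (word e) (some a) = none := by
  have hle (x : A) : e x ≤ posLast A := Nat.le_sub_one_of_lt (e x).isLt
  obtain ⟨P, hP⟩ := forall_le_iff_word_eq_concat.1 fun x => (hle x).trans_eq h.symm
  exact hP ▸ wordCycle_concat_apply_last (hP ▸ nodup_word e)

variable {π : RPair A} {S Q : Perm A}

lemma removePoint_none_vertexPerm_apply (hS : IsS π S) (b : A) :
    removePoint none (vertexPerm (wordPair π)) (some b) = some (S b) := by
  obtain ⟨hfirst, hsucc⟩ := hS b
  by_cases hb : π true b = posFirst A
  · have hvertex : vertexPerm (wordPair π) (some b) = some (S b) := by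
      rw [← wordCycle_word_apply_none hb]
      refine (vertexPerm_wordCycle (wordPair π) none).trans (wordCycle_word_apply_none ?_)
      rw [hfirst hb, apply_symm_apply]
    rw [removePoint_apply_of_ne (Option.some_ne_none b) (by simp [hvertex]), hvertex]
  obtain ⟨htopLast, hother⟩ := hsucc hb
  by_cases hlast : (π true b : ℕ) = (π true ((π false).symm (posLast A)) : ℕ) + 1
  · have hvertex : vertexPerm (wordPair π) (some b) = none := by
      rw [← wordCycle_word_apply_of_val_eq hlast]
      refine (vertexPerm_wordCycle (wordPair π) _).trans (wordCycle_word_apply_last ?_)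
      rw [apply_symm_apply]
    have hnone : vertexPerm (wordPair π) none = some (S b) := by
      rw [← wordCycle_word_apply_last ((π true).apply_symm_apply (posLast A))]
      exact (vertexPerm_wordCycle (wordPair π) _).trans
        (wordCycle_word_apply_of_val_eq (htopLast hlast))
    rw [removePoint_apply_of_apply_eq hvertex, hnone]
  · have hvertex : vertexPerm (wordPair π) (some b) = some (S b) := by
      have hpos : (π true b : ℕ) ≠ 0 := fun h => hb (Fin.ext h)
      refine Eq.trans ?_ (wordCycle_word_apply_of_val_eq (hother hlast))
      refine Eq.trans ?_ (vertexPerm_wordCycle (wordPair π) _)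
      congr 1
      exact (wordCycle_word_apply_of_val_eq (by rw [apply_symm_apply]; dsimp only; omega)).symm
    rw [removePoint_apply_of_ne (Option.some_ne_none b) (by simp [hvertex]), hvertex]

lemma optionCongr_eq_of_isS (hS : IsS π S) :
    optionCongr S = removePoint none (vertexPerm (wordPair π)) := by
  ext1 x
  cases x with
  | none => exact (removePoint_apply_self _ _).symm
  | some b => rw [optionCongr_apply, Option.map_some, removePoint_none_vertexPerm_apply hS]

lemma eq_removePoint_of_isQ (hQ : IsQ π S Q) : Q = removePoint (XOf π) S := by
  ext b
  by_cases hb : b = XOf π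
  · rw [hb, hQ.1, removePoint_apply_self]
  · obtain ⟨heq, hne⟩ := hQ.2 b hb
    by_cases hSb : S b = XOf π
    · rw [heq hSb, removePoint_apply_of_apply_eq hSb, hSb]
    · rw [hne hSb, removePoint_apply_of_ne hb hSb]

lemma wordCycle_wordPair_none (π : RPair A) : wordCycle (wordPair π).1 none = some (XOf π) :=
  wordCycle_word_apply_none ((π false).apply_symm_apply _)

lemma cornerPerm_wordPair (hS : IsS π S) (hQ : IsQ π S Q) : cornerPerm (wordPair π) = Q := by
  rw [cornerPerm, wordCycle_wordPair_none, ← optionCongr_eq_of_isS hS, eq_removePoint_of_isQ hQ]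
  rw [removePoint, optionCongr_apply, Option.map_some, ← optionCongr_swap]
  exact removeNone_optionCongr (removePoint (XOf π) S)

theorem hasDistinctAngles_wordPair_iff [Nontrivial A] (hπ : PairIrreducible π) (hS : IsS π S)
    (hQ : IsQ π S Q) : HasDistinctAngles (wordPair π) ↔ (lamOf Q).Nodup := by
  rw [(isIrreducible_wordPair hπ).hasDistinctAngles_iff (isLabeled_wordPair π),
    nodup_lamOf_iff hQ.1, cornerPerm_wordPair hS hQ, wordCycle_wordPair_none]
  simp only [ne_eq, Option.some.injEq]

end Link

/-! ### The renaming group -/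

section RenamingGroup

variable {L : Type*}

lemma eq_top_of_alternatingGroup_le [Fintype L] [DecidableEq L] {G : Subgroup (Perm L)}
    (hG : alternatingGroup L ≤ G) {τ : Perm L} (hτ : τ ∈ G) (hsign : Perm.sign τ = -1) : G = ⊤ := by
  refine (Subgroup.eq_top_iff' G).2 fun σ => ?_
  rcases Int.units_eq_one_or (Perm.sign σ) with h | h
  · exact hG (Perm.mem_alternatingGroup.2 h)
  · refine (Subgroup.mul_mem_cancel_right G hτ).1 (hG (Perm.mem_alternatingGroup.2 ?_))
    rw [Perm.sign_mul, h, hsign, Int.units_mul_self]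

variable [Nontrivial L] {p : List L × List L}

theorem renamingGroup_eq_alternatingGroup [Fintype L] [DecidableEq L] (hl : IsLabeled p)
    (hi : IsIrreducible p) (hp : HasDistinctAngles p) : renamingGroup p = alternatingGroup L :=
  le_antisymm (fun _ hσ => Perm.mem_alternatingGroup.2 (sign_eq_one_of_mem_renamingGroup hl hp hσ))
    (alternatingGroup_le_renamingGroup hl hi)

theorem renamingGroup_eq_top [Finite L] [DecidableEq L] (hl : IsLabeled p)
    (hi : IsIrreducible p) (hp : ¬ HasDistinctAngles p) : renamingGroup p = ⊤ := by
  have := Fintype.ofFinite L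
  obtain ⟨_, hτ, hsign⟩ := exists_mem_renamingGroup_sign_eq_neg_one hl hi hp
  exact eq_top_of_alternatingGroup_le (alternatingGroup_le_renamingGroup hl hi) hτ hsign

end RenamingGroup

end Rauzy

/-- if `Λ(π)` is simple then `2·#E(π) = N!·#Ē(π)`;
if `Λ(π)` is not simple then `#E(π) = N!·#Ē(π)`. -/
theorem stmt0 {A : Type*} [Fintype A] [DecidableEq A] [Nonempty A]
    (hN : 2 ≤ Fintype.card A) (π : RPair A) (hπ : PairIrreducible π)
    (S Q : Equiv.Perm A) (hS : IsS π S) (hQ : IsQ π S Q) :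
    ((lamOf Q).Nodup →
      2 * (EClass π).ncard =
        Nat.factorial (Fintype.card A) * (nonlabeled '' EClass π).ncard) ∧
    (¬ (lamOf Q).Nodup →
      (EClass π).ncard =
        Nat.factorial (Fintype.card A) * (nonlabeled '' EClass π).ncard) := by
  have : Nontrivial A := Fintype.one_lt_card_iff_nontrivial.1 hN
  have hl := Rauzy.isLabeled_wordPair π
  have hi := Rauzy.isIrreducible_wordPair hπ
  have hcard : Nat.card (Perm A) = Nat.factorial (Fintype.card A) := by
    rw [Nat.card_perm, Nat.card_eq_fintype_card]
  rw [← Rauzy.hasDistinctAngles_wordPair_iff hπ hS hQ, Rauzy.ncard_EClass, ← hcard]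
  constructor
  · intro hp
    rw [Rauzy.renamingGroup_eq_alternatingGroup hl hi hp, ← mul_assoc,
      two_mul_nat_card_alternatingGroup]
  · intro hp
    rw [Rauzy.renamingGroup_eq_top hl hi hp, Subgroup.card_top]
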